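/- arXiv:1205.4135 — 12 statements merged into one kernel-verified Lean document; each statement's English description precedes it below -/
import Mathlib

section
/- Under Assumptions 1 and 2, for every real α ≤ -1 the scaled cumulant generating function exists and satisfies lim_{k→∞} (1/k) log Σ_{w∈A^k} p_k(w) G_k(w)^α = p₁, and moreover lim_{β↓-1} Λ(β) = p₁. Consequently the extension of Λ to all of ℝ by Λ(α) := p₁ for α ≤ -1 is finite everywhere and continuous. -/
open Filter Topology

/-!
Write `M k` for the largest probability of a word of length `k`. For `s = 1 / (1 + α) > 0`,
bounding the sum below by its largest term and above by `m ^ k` copies of it gives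
`M k ^ s ≤ ∑ w, p k w ^ s ≤ m ^ k * M k ^ s`. After taking `(1 + α) / k` times the logarithm,
the Rényi form of `Λ` yields `p₁ ≤ Λ α ≤ p₁ + (1 + α) * log m`, so `Λ β → p₁` as `β ↓ -1`.

For `α ≤ -1` the word guessed first is a most likely one, so its term alone gives
`M k ≤ ∑ w, p k w * G k w ^ α`; since `G ≥ 1`, the sum is at most the one with exponent `β`, for
any `β > -1`. Hence every limit point of the scaled logarithms lies between `p₁` and `Λ β`, and
`β ↓ -1` closes the gap.
-/

/-- If `q` attains its maximum `q w₀ > 0`, then `t * log (∑ w, q w ^ (1 / t))` lies within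
`t * log (card ι)` above `log (q w₀)`. -/
lemma log_renyi_bounds {ι : Type*} [Fintype ι] (q : ι → ℝ) (hq : ∀ w, 0 ≤ q w) (w₀ : ι)
    (hmax : ∀ w, q w ≤ q w₀) (hpos : 0 < q w₀) (t : ℝ) (ht : 0 < t) :
    Real.log (q w₀) ≤ t * Real.log (∑ w, q w ^ (1 / t)) ∧
      t * Real.log (∑ w, q w ^ (1 / t)) ≤
        Real.log (q w₀) + t * Real.log (Fintype.card ι) := by
  have hs : 0 < 1 / t := by positivity
  have h1 : q w₀ ^ (1 / t) ≤ ∑ w, q w ^ (1 / t) :=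
    Finset.single_le_sum (f := fun w => q w ^ (1 / t))
      (fun w _ => Real.rpow_nonneg (hq w) _) (Finset.mem_univ w₀)
  have h2 : ∑ w, q w ^ (1 / t) ≤ Fintype.card ι * q w₀ ^ (1 / t) := by
    calc ∑ w, q w ^ (1 / t) ≤ ∑ _w : ι, q w₀ ^ (1 / t) :=
          Finset.sum_le_sum fun w _ => Real.rpow_le_rpow (hq w) (hmax w) hs.le
      _ = _ := by simp
  have h0 : 0 < q w₀ ^ (1 / t) := Real.rpow_pos_of_pos hpos _
  have hcard : (Fintype.card ι : ℝ) ≠ 0 := by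
    have : Nonempty ι := ⟨w₀⟩
    exact_mod_cast Fintype.card_ne_zero
  have hlog : t * Real.log (q w₀ ^ (1 / t)) = Real.log (q w₀) := by
    rw [Real.log_rpow hpos]
    field_simp
  constructor
  · rw [← hlog]
    exact mul_le_mul_of_nonneg_left (Real.log_le_log h0 h1) ht.le
  · have h3 := mul_le_mul_of_nonneg_left (Real.log_le_log (h0.trans_le h1) h2) ht.le
    rw [Real.log_mul hcard h0.ne', mul_add, hlog] at h3
    linarith

/-- **Guesswork, Lemma 1 (Existence of the sCGF).**
Under Assumptions 1 and 2, for every `α ≤ -1` the scaled cumulant generating function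
exists and equals `p₁`, the limit `lim_{β ↓ -1} Λ(β)` equals `p₁`, and hence the extension
of `Λ` by `Λ(α) := p₁` for `α ≤ -1` is (finite everywhere and) continuous. -/
theorem guesswork_sCGF_exists_below_neg_one
    (m : ℕ) (hm : 2 ≤ m)
    (p : (k : ℕ) → (Fin k → Fin m) → ℝ)
    (hp_nonneg : ∀ k w, 0 ≤ p k w)
    (hp_sum : ∀ k, ∑ w, p k w = 1)
    (G : (k : ℕ) → (Fin k → Fin m) → ℕ)
    (hG_bij : ∀ k, Set.BijOn (G k) Set.univ (Set.Icc 1 (m ^ k)))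
    (hG_mono : ∀ k (w w' : Fin k → Fin m), G k w < G k w' → p k w' ≤ p k w)
    (Λ Λ' : ℝ → ℝ)
    -- Assumption 1: the sCGF exists for α > -1 ...
    (h_sCGF : ∀ α : ℝ, -1 < α →
      Tendsto (fun k : ℕ => (k : ℝ)⁻¹ *
          Real.log (∑ w, p k w * (G k w : ℝ) ^ α)) atTop (𝓝 (Λ α)))
    -- ... is continuously differentiable on (-1, ∞) ...
    (h_deriv : ∀ α : ℝ, -1 < α → HasDerivAt Λ (Λ' α) α)
    (h_deriv_cont : ContinuousOn Λ' (Set.Ioi (-1 : ℝ)))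
    -- ... and equals α times the specific Rényi entropy with parameter 1/(1+α).
    (h_renyi : ∀ α : ℝ, -1 < α →
      Tendsto (fun k : ℕ => (k : ℝ)⁻¹ * (1 + α) *
          Real.log (∑ w, p k w ^ (1 / (1 + α)))) atTop (𝓝 (Λ α)))
    -- Assumption 2: the rate of the probability of the most likely word exists in (-∞, 0].
    (p₁ : ℝ) (hp₁_le : p₁ ≤ 0)
    (hp₁ : Tendsto (fun k : ℕ => (k : ℝ)⁻¹ * Real.log (⨆ w, p k w)) atTop (𝓝 p₁)) :
    (∀ α : ℝ, α ≤ -1 →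
      Tendsto (fun k : ℕ => (k : ℝ)⁻¹ *
          Real.log (∑ w, p k w * (G k w : ℝ) ^ α)) atTop (𝓝 p₁))
    ∧ Tendsto Λ (𝓝[>] (-1 : ℝ)) (𝓝 p₁)
    ∧ Continuous (fun α : ℝ => if α ≤ -1 then p₁ else Λ α) := by
  -- The word guessed first is a most likely one, and its probability is positive.
  have hfirst : ∀ k, ∃ w₀, G k w₀ = 1 ∧ (∀ w, p k w ≤ p k w₀) ∧ 0 < p k w₀ ∧
      ⨆ w, p k w = p k w₀ := by
    intro k
    obtain ⟨w₀, -, hw₀⟩ := (hG_bij k).surjOn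
      (show 1 ∈ Set.Icc 1 (m ^ k) from ⟨le_rfl, Nat.one_le_pow _ _ (by omega)⟩)
    have hmax : ∀ w, p k w ≤ p k w₀ := by
      intro w
      rcases eq_or_ne w w₀ with rfl | hne
      · exact le_rfl
      · apply hG_mono
        have h1 : 1 ≤ G k w := ((hG_bij k).mapsTo (Set.mem_univ w)).1
        have h2 : G k w ≠ G k w₀ := fun h =>
          hne ((hG_bij k).injOn (Set.mem_univ _) (Set.mem_univ _) h)
        omega
    have : Nonempty (Fin k → Fin m) := ⟨w₀⟩
    refine ⟨w₀, hw₀, hmax, ?_, ?_⟩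
    · by_contra! hle
      have := hp_sum k
      rw [Finset.sum_eq_zero fun w _ => le_antisymm ((hmax w).trans hle) (hp_nonneg k w)] at this
      exact zero_ne_one this
    · exact le_antisymm (ciSup_le hmax)
        (le_ciSup (f := p k) ⟨p k w₀, by rintro _ ⟨w, rfl⟩; exact hmax w⟩ w₀)
  choose w₀ hG₀ hmax hpos hsup using hfirst
  simp only [hsup] at hp₁
  have hΛ_ge : ∀ α : ℝ, -1 < α → p₁ ≤ Λ α := by
    intro α hα
    refine le_of_tendsto_of_tendsto' hp₁ (h_renyi α hα) fun k => ?_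
    rw [mul_assoc]
    exact mul_le_mul_of_nonneg_left (log_renyi_bounds (p k) (hp_nonneg k) (w₀ k) (hmax k)
      (hpos k) (1 + α) (by linarith)).1 (by positivity)
  have hΛ_le : ∀ α : ℝ, -1 < α → Λ α ≤ p₁ + (1 + α) * Real.log m := by
    intro α hα
    refine le_of_tendsto_of_tendsto (h_renyi α hα) (hp₁.add_const ((1 + α) * Real.log m)) ?_
    filter_upwards [eventually_gt_atTop 0] with k hk
    have hk' : (0 : ℝ) < k := by exact_mod_cast hk
    have h := mul_le_mul_of_nonneg_left (log_renyi_bounds (p k) (hp_nonneg k) (w₀ k) (hmax k)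
      (hpos k) (1 + α) (by linarith)).2 (inv_nonneg.2 hk'.le)
    have hcard : Real.log (Fintype.card (Fin k → Fin m)) = k * Real.log m := by
      simp
    rw [hcard] at h
    rw [mul_assoc]
    refine h.trans_eq ?_
    field_simp
  have hlim : Tendsto Λ (𝓝[>] (-1 : ℝ)) (𝓝 p₁) := by
    have hup : Tendsto (fun α : ℝ => p₁ + (1 + α) * Real.log m) (𝓝[>] (-1 : ℝ)) (𝓝 p₁) := by
      have hc : Continuous fun α : ℝ => p₁ + (1 + α) * Real.log m := by fun_prop
      have := (hc.tendsto (-1)).mono_left (nhdsWithin_le_nhds (s := Set.Ioi (-1 : ℝ)))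
      simpa using this
    refine tendsto_of_tendsto_of_tendsto_of_le_of_le' tendsto_const_nhds hup ?_ ?_
    · filter_upwards [self_mem_nhdsWithin] with α hα using hΛ_ge α hα
    · filter_upwards [self_mem_nhdsWithin] with α hα using hΛ_le α hα
  have hterm : ∀ (k : ℕ) (α : ℝ), p k (w₀ k) ≤ ∑ w, p k w * (G k w : ℝ) ^ α := by
    intro k α
    have h := Finset.single_le_sum (f := fun w => p k w * (G k w : ℝ) ^ α)
      (fun w _ => mul_nonneg (hp_nonneg k w) (Real.rpow_nonneg (Nat.cast_nonneg _) _))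
      (Finset.mem_univ (w₀ k))
    simpa [hG₀ k] using h
  refine ⟨fun α hα => ?_, hlim, ?_⟩
  · rw [tendsto_order]
    constructor
    · intro a ha
      filter_upwards [hp₁.eventually (lt_mem_nhds ha)] with k hk
      exact hk.trans_le (mul_le_mul_of_nonneg_left
        (Real.log_le_log (hpos k) (hterm k α)) (by positivity))
    · intro b hb
      -- Some `β > -1` already has `Λ β < b`, and its sums dominate those with exponent `α`.
      obtain ⟨β, hβb, hβ⟩ := ((hlim.eventually (gt_mem_nhds hb)).and self_mem_nhdsWithin).exists
      filter_upwards [(h_sCGF β hβ).eventually (gt_mem_nhds hβb)] with k hk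
      refine lt_of_le_of_lt (mul_le_mul_of_nonneg_left
        (Real.log_le_log ((hpos k).trans_le (hterm k α)) ?_) (by positivity)) hk
      refine Finset.sum_le_sum fun w _ => mul_le_mul_of_nonneg_left ?_ (hp_nonneg k w)
      have h1 : (1 : ℝ) ≤ G k w := by
        exact_mod_cast ((hG_bij k).mapsTo (Set.mem_univ w)).1
      exact Real.rpow_le_rpow_of_exponent_le h1 (hα.trans (le_of_lt hβ))
  · rw [continuous_iff_continuousAt]
    intro α
    rcases lt_trichotomy α (-1) with h | rfl | h
    · refine (continuousAt_const (y := p₁)).congr ?_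
      filter_upwards [gt_mem_nhds h] with x hx
      rw [if_pos hx.le]
    · rw [continuousAt_iff_continuous_left'_right']
      constructor
      · have hl : Tendsto (fun _ : ℝ => p₁) (𝓝[<] (-1 : ℝ)) (𝓝 p₁) := tendsto_const_nhds
        simp only [ContinuousWithinAt, le_refl, if_true]
        refine hl.congr' ?_
        filter_upwards [self_mem_nhdsWithin] with x hx
        rw [if_pos (le_of_lt hx)]
      · simp only [ContinuousWithinAt, le_refl, if_true]
        refine hlim.congr' ?_
        filter_upwards [self_mem_nhdsWithin] with x hx
        rw [if_neg (not_le.2 hx)]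
    · refine (h_deriv α h).continuousAt.congr ?_
      filter_upwards [lt_mem_nhds h] with x hx
      rw [if_neg (not_le.2 hx)]
end

section
/- Let q be a probability mass function on the finite alphabet A = Fin m with all values q(a) > 0. Then the right-hand derivative limit lim_{α↓-1} d/dα [ (1+α) log Σ_{a∈A} q(a)^{1/(1+α)} ] exists and equals log |{a ∈ A : q(a) = max_{b∈A} q(b)}|, the logarithm of the number of most likely letters. -/
/-!
Let `M = max q`, `c a = log (q a) - log M ≤ 0` and `u = 1 / (1 + α)`. Factoring `M ^ u` out of the
sum shows that for `α > -1` the function equals `log M + (1 + α) log S`, where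
`S = ∑ a, exp (c a * u)`, so its derivative is `log S - (∑ a, c a * exp (c a * u) * u) / S`.
As `α ↓ -1`, `u → ∞`: the terms of `S` with `c a = 0` (the most likely letters) are all `1` and
the others vanish, so `S` tends to the number of most likely letters, while every term of the
numerator tends to `0`, because an exponential decay beats the linear factor `u`.
-/

open Filter Topology

open scoped Classical

lemma tendsto_exp_mul_atTop_ite {c : ℝ} (hc : c ≤ 0) :
    Tendsto (fun u : ℝ => Real.exp (c * u)) atTop (𝓝 (if c = 0 then 1 else 0)) := by
  split_ifs with h
  · simp [h]
  · exact Real.tendsto_exp_atBot.comp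
      (tendsto_id.const_mul_atTop_of_neg (lt_of_le_of_ne hc h))

lemma tendsto_mul_exp_mul_mul_atTop {c : ℝ} (hc : c ≤ 0) :
    Tendsto (fun u : ℝ => c * Real.exp (c * u) * u) atTop (𝓝 0) := by
  rcases hc.eq_or_lt with rfl | h
  · simp
  -- The term is `-(x * exp (-x))` with `x = -c * u → ∞`.
  have h1 : Tendsto (fun u : ℝ => -c * u) atTop atTop :=
    tendsto_id.const_mul_atTop (neg_pos.2 h)
  have h2 := ((Real.tendsto_pow_mul_exp_neg_atTop_nhds_zero 1).comp h1).neg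
  rw [neg_zero] at h2
  refine h2.congr fun u => ?_
  simp only [Function.comp, pow_one, neg_mul, neg_neg]
  ring

/-- The derivative of the cumulant generating function for `α > -1`, with the largest value `M`
factored out of the sum. The identity holds for any `M`; the choice matters only in the limit. -/
lemma hasDerivAt_guesswork {m : ℕ} (hm : 0 < m) {q : Fin m → ℝ} (hq : ∀ a, 0 < q a) (M : ℝ)
    {α : ℝ} (hα : -1 < α) :
    HasDerivAt (fun α : ℝ => (1 + α) * Real.log (∑ a, q a ^ (1 / (1 + α))))
      (Real.log (∑ a, Real.exp ((Real.log (q a) - Real.log M) * (1 / (1 + α)))) -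
        (∑ a, (Real.log (q a) - Real.log M) *
            Real.exp ((Real.log (q a) - Real.log M) * (1 / (1 + α))) * (1 / (1 + α))) /
          ∑ a, Real.exp ((Real.log (q a) - Real.log M) * (1 / (1 + α)))) α := by
  haveI : Nonempty (Fin m) := ⟨⟨0, hm⟩⟩
  set c : Fin m → ℝ := fun a => Real.log (q a) - Real.log M with hc
  have hS : ∀ x : ℝ, 0 < ∑ a, Real.exp (c a * (1 / (1 + x))) := fun x =>
    Finset.sum_pos (fun a _ => Real.exp_pos _) Finset.univ_nonempty
  have hfac : (fun α : ℝ => (1 + α) * Real.log (∑ a, q a ^ (1 / (1 + α)))) =ᶠ[𝓝 α]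
      fun x => Real.log M + (1 + x) * Real.log (∑ a, Real.exp (c a * (1 / (1 + x)))) := by
    filter_upwards [lt_mem_nhds hα] with x hx
    have hx' : 1 + x ≠ 0 := by linarith
    have : ∑ a, q a ^ (1 / (1 + x)) =
        Real.exp (Real.log M * (1 / (1 + x))) * ∑ a, Real.exp (c a * (1 / (1 + x))) := by
      rw [Finset.mul_sum]
      refine Finset.sum_congr rfl fun a _ => ?_
      rw [Real.rpow_def_of_pos (hq a), ← Real.exp_add]
      congr 1
      simp only [hc]
      ring
    rw [this, Real.log_mul (Real.exp_pos _).ne' (hS x).ne', Real.log_exp]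
    field_simp
  refine HasDerivAt.congr_of_eventuallyEq ?_ hfac
  have hα' : 1 + α ≠ 0 := by linarith
  have hid : HasDerivAt (fun x : ℝ => 1 + x) 1 α := (hasDerivAt_id α).const_add 1
  have hu : HasDerivAt (fun x : ℝ => 1 / (1 + x)) (-1 / (1 + α) ^ 2) α := by
    simpa only [one_div] using hid.fun_inv hα'
  have hsum : HasDerivAt (fun x : ℝ => ∑ a, Real.exp (c a * (1 / (1 + x))))
      (∑ a, Real.exp (c a * (1 / (1 + α))) * (c a * (-1 / (1 + α) ^ 2))) α :=
    HasDerivAt.fun_sum fun a _ => (hu.const_mul (c a)).exp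
  have hmain := (hid.fun_mul (hsum.log (hS α).ne')).const_add (Real.log M)
  refine hmain.congr_deriv ?_
  have hnum : (1 + α) * ∑ a, Real.exp (c a * (1 / (1 + α))) * (c a * (-1 / (1 + α) ^ 2)) =
      -∑ a, c a * Real.exp (c a * (1 / (1 + α))) * (1 / (1 + α)) := by
    rw [Finset.mul_sum, ← Finset.sum_neg_distrib]
    refine Finset.sum_congr rfl fun a _ => ?_
    generalize Real.exp (c a * (1 / (1 + α))) = e
    field_simp
  rw [one_mul, ← mul_div_assoc, hnum, neg_div, ← sub_eq_add_neg]

/-- **Guesswork, Lemma 2 (The number of most likely words, i.i.d. case).**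
For a probability mass function `q` on `Fin m` with all values positive, the limit as
`α ↓ -1` of the derivative of `α ↦ (1+α) log Σ_a q(a)^{1/(1+α)}` (which is `α` times the
Rényi entropy at parameter `1/(1+α)`) exists and equals the logarithm of the number of
most likely letters. -/
theorem guesswork_iid_turn_eq_log_card_max
    (m : ℕ) (hm : 0 < m) (q : Fin m → ℝ)
    (hq_pos : ∀ a, 0 < q a) (hq_sum : ∑ a, q a = 1) :
    Tendsto (deriv (fun α : ℝ => (1 + α) * Real.log (∑ a, q a ^ (1 / (1 + α)))))
      (𝓝[>] (-1 : ℝ))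
      (𝓝 (Real.log ((Finset.univ.filter fun a => q a = ⨆ b, q b).card))) := by
  haveI : Nonempty (Fin m) := ⟨⟨0, hm⟩⟩
  set M := ⨆ b, q b with hM
  have hle : ∀ a, q a ≤ M := fun a => le_ciSup (Set.finite_range q).bddAbove a
  obtain ⟨a₀, ha₀⟩ : ∃ a, q a = M := exists_eq_ciSup_of_finite
  have hMpos : 0 < M := ha₀ ▸ hq_pos a₀
  have hc : ∀ a, Real.log (q a) - Real.log M ≤ 0 := fun a =>
    sub_nonpos.2 (Real.log_le_log (hq_pos a) (hle a))
  have hc0 : ∀ a, Real.log (q a) - Real.log M = 0 ↔ q a = M := fun a => by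
    rw [sub_eq_zero]
    exact Real.log_injOn_pos.eq_iff (hq_pos a) hMpos
  have hu : Tendsto (fun α : ℝ => 1 / (1 + α)) (𝓝[>] (-1 : ℝ)) atTop := by
    simp only [one_div]
    refine tendsto_inv_nhdsGT_zero.comp (tendsto_nhdsWithin_iff.2 ⟨?_, ?_⟩)
    · have : Tendsto (fun α : ℝ => 1 + α) (𝓝 (-1)) (𝓝 (1 + -1)) :=
        tendsto_const_nhds.add tendsto_id
      rw [add_neg_cancel] at this
      exact this.mono_left nhdsWithin_le_nhds
    · filter_upwards [self_mem_nhdsWithin] with α hα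
      have : -1 < α := hα
      show 0 < 1 + α
      linarith
  have hS : Tendsto (fun u : ℝ => ∑ a, Real.exp ((Real.log (q a) - Real.log M) * u)) atTop
      (𝓝 ((Finset.univ.filter fun a => q a = M).card : ℝ)) := by
    have := tendsto_finsetSum Finset.univ fun a _ => tendsto_exp_mul_atTop_ite (hc a)
    simpa only [hc0, Finset.sum_boole] using this
  have hN : Tendsto (fun u : ℝ => ∑ a, (Real.log (q a) - Real.log M) *
      Real.exp ((Real.log (q a) - Real.log M) * u) * u) atTop (𝓝 0) := by
    simpa only [Finset.sum_const_zero] using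
      tendsto_finsetSum Finset.univ fun a _ => tendsto_mul_exp_mul_mul_atTop (hc a)
  have hcard : ((Finset.univ.filter fun a => q a = M).card : ℝ) ≠ 0 :=
    Nat.cast_ne_zero.2 (Finset.card_pos.2 ⟨a₀, by simp [ha₀]⟩).ne'
  have hlim := ((hS.log hcard).sub (hN.div hS hcard)).comp hu
  rw [zero_div, sub_zero] at hlim
  refine hlim.congr' ?_
  filter_upwards [self_mem_nhdsWithin] with α hα
  exact (hasDerivAt_guesswork hm hq_pos M hα).deriv.symm
end

section
/- (Large deviations of guesswork.) Under Assumptions 1 and 2, the sequence {(1/k) log G_k(W_k)} satisfies a Large Deviation Principle with rate function Λ*. Concretely: extend Λ by Λ(α) := p₁ for α ≤ -1 and set Λ*(x) := sup_{α∈ℝ} (xα - Λ(α)). Then for every x ∈ [0, log m], writing B_ε(x) = (x-ε, x+ε), both lim_{ε↓0} liminf_{k→∞} (1/k) log Σ_{w : (1/k) log G_k(w) ∈ B_ε(x)} p_k(w) and lim_{ε↓0} limsup_{k→∞} (1/k) log Σ_{w : (1/k) log G_k(w) ∈ B_ε(x)} p_k(w) exist and are equal to -Λ*(x). -/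
/-!
The upper bound is Chernoff's: for `α > -1` the probability of the window around `x` is at most
`exp (-k x α + o(k))` times the `α`-th moment of the guesswork, whose exponential rate is `Λ(α)`.
Exponents `α ≤ -1` add nothing, because `x ≥ 0` and `Λ(α) → p₁` as `α ↓ -1` (`renyi_bounds`).

For the lower bound, let `y = Λ'(α)`. Differentiability of `Λ` at `α` forces the law tilted by
`G ^ α` to concentrate near `y` (`tilted_mass`), whence the window around `y` has probability at
least `exp (k (Λ(α) - α y) - o(k))` (`lower_exposed`). As `Λ'` is continuous, three cases remain.

* `x` is a value of `Λ'`: this is the bound just described.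
* `x` exceeds every value of `Λ'`: if `Λ*(x)` is finite, then `x α - Λ(α)` is bounded, so `Λ'(α)`
  is close to `x` for some `α > 0`, and there `Λ(α) - α Λ'(α) ≥ Λ(α) - α x ≥ -Λ*(x)`.
* `x` is below every value of `Λ'`: here only `-Λ*(x) ≤ x + p₁` is used. The window around
  `y = Λ'(α)` contains a word of probability about `exp (k (Λ(α) - (1 + α) y))`, so all words
  guessed earlier are at least as likely, and about `exp (k x)` of them lie near `x`
  (`lower_linear`). Letting `α ↓ -1` along points with `(1 + α) Λ'(α) → 0`
  (`exists_near_neg_one`) gives the rate `x + p₁`.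

No convexity of `Λ` or `Λ*` is needed.
-/

open Filter Topology

open scoped Classical ENNReal

/-- The sCGF extended to all of `ℝ` by `Λ(α) := p₁` for `α ≤ -1`. -/
noncomputable def guessworkLambdaExt (Λ : ℝ → ℝ) (p₁ : ℝ) : ℝ → ℝ :=
  fun α => if α ≤ -1 then p₁ else Λ α

/-- The Legendre–Fenchel transform `Λ*(x) = sup_α (xα - Λ(α))` of the extended sCGF,
taking values in the extended reals since the supremum may be infinite. -/
noncomputable def guessworkRate (Λ : ℝ → ℝ) (p₁ : ℝ) : ℝ → EReal :=
  fun x => ⨆ α : ℝ, ((x * α - guessworkLambdaExt Λ p₁ α : ℝ) : EReal)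

/-! ### Elementary estimates -/

/-- The words of length `k` whose normalised log-guesswork lies within `ε` of `x`. -/
noncomputable def gWin {m : ℕ} (G : (k : ℕ) → (Fin k → Fin m) → ℕ) (k : ℕ) (x ε : ℝ) :
    Finset (Fin k → Fin m) :=
  Finset.univ.filter (fun w => (k : ℝ)⁻¹ * Real.log (G k w) ∈ Set.Ioo (x - ε) (x + ε))

theorem mem_gWin {m : ℕ} {G : (k : ℕ) → (Fin k → Fin m) → ℕ} {k : ℕ} (hk : 0 < k) {x ε : ℝ}
    {w : Fin k → Fin m} :
    w ∈ gWin G k x ε ↔ k * (x - ε) < Real.log (G k w) ∧ Real.log (G k w) < k * (x + ε) := by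
  have hk' : (0 : ℝ) < k := by exact_mod_cast hk
  simp only [gWin, Finset.mem_filter, Finset.mem_univ, true_and, Set.mem_Ioo]
  rw [lt_inv_mul_iff₀ hk', inv_mul_lt_iff₀ hk']

theorem rpow_eq_exp {n : ℕ} (hn : 1 ≤ n) (α : ℝ) : (n : ℝ) ^ α = Real.exp (α * Real.log n) := by
  rw [Real.rpow_def_of_pos (by exact_mod_cast hn), mul_comm]

/-- On the window around `x`, `G ^ α` is `exp (k α x)` up to a factor `exp (± k |α| ε)`. -/
theorem rpow_bounds {m : ℕ} {G : (k : ℕ) → (Fin k → Fin m) → ℕ} {k : ℕ} (hk : 0 < k) {x ε : ℝ}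
    {w : Fin k → Fin m} (hG : 1 ≤ G k w) (hw : w ∈ gWin G k x ε) (α : ℝ) :
    Real.exp (k * (α * x - |α| * ε)) ≤ (G k w : ℝ) ^ α ∧
      (G k w : ℝ) ^ α ≤ Real.exp (k * (α * x + |α| * ε)) := by
  rw [mem_gWin hk] at hw
  rw [rpow_eq_exp hG, Real.exp_le_exp, Real.exp_le_exp]
  have h1 : |Real.log (G k w) - k * x| ≤ k * ε := by
    rw [abs_le]; constructor <;> linarith [hw.1, hw.2]
  have h2 : |α * (Real.log (G k w) - k * x)| ≤ |α| * (k * ε) := by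
    rw [abs_mul]; exact mul_le_mul_of_nonneg_left h1 (abs_nonneg α)
  rw [abs_le] at h2
  constructor <;> linarith [h2.1, h2.2]

theorem eventually_mul_exp_le {a b : ℝ} (hab : a < b) (C : ℝ) :
    ∀ᶠ k : ℕ in atTop, C * Real.exp (k * a) ≤ Real.exp (k * b) := by
  have h : Tendsto (fun k : ℕ => Real.exp ((k : ℝ) * (b - a))) atTop atTop :=
    Real.tendsto_exp_atTop.comp
      (tendsto_natCast_atTop_atTop.atTop_mul_const (sub_pos.2 hab))
  filter_upwards [h.eventually_ge_atTop C] with k hk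
  calc C * Real.exp (k * a) ≤ Real.exp (k * (b - a)) * Real.exp (k * a) :=
        mul_le_mul_of_nonneg_right hk (Real.exp_pos _).le
    _ = Real.exp (k * b) := by rw [← Real.exp_add]; congr 1; ring

/-- A limit of normalised logarithms, restated as two-sided exponential bounds. -/
theorem eventually_exp_bounds {S : ℕ → ℝ} {L : ℝ} (hS : ∀ k, 0 < S k)
    (h : Tendsto (fun k : ℕ => (k : ℝ)⁻¹ * Real.log (S k)) atTop (𝓝 L)) {δ : ℝ} (hδ : 0 < δ) :
    ∀ᶠ k : ℕ in atTop, Real.exp (k * (L - δ)) ≤ S k ∧ S k ≤ Real.exp (k * (L + δ)) := by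
  filter_upwards [h.eventually (Ioo_mem_nhds (sub_lt_self L hδ) (lt_add_of_pos_right L hδ)),
    eventually_gt_atTop 0] with k hk hk0
  have hk' : (0 : ℝ) < k := by exact_mod_cast hk0
  obtain ⟨h1, h2⟩ := hk
  rw [lt_inv_mul_iff₀ hk'] at h1
  rw [inv_mul_lt_iff₀ hk'] at h2
  exact ⟨((Real.lt_log_iff_exp_lt (hS k)).1 h1).le, ((Real.log_lt_iff_lt_exp (hS k)).1 h2).le⟩

theorem moment_pos {m : ℕ} {p : (k : ℕ) → (Fin k → Fin m) → ℝ}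
    (hp_nonneg : ∀ k w, 0 ≤ p k w) (hp_sum : ∀ k, ∑ w, p k w = 1)
    {G : (k : ℕ) → (Fin k → Fin m) → ℕ} (hG : ∀ k w, 1 ≤ G k w) (α : ℝ) (k : ℕ) :
    0 < ∑ w, p k w * (G k w : ℝ) ^ α := by
  have hpow : ∀ w, (0 : ℝ) < (G k w : ℝ) ^ α := fun w =>
    Real.rpow_pos_of_pos (by exact_mod_cast hG k w) α
  obtain ⟨w, -, hw⟩ : ∃ w ∈ Finset.univ, 0 < p k w := by
    apply Finset.exists_lt_of_sum_lt
    simp [hp_sum]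
  exact Finset.sum_pos' (fun w _ => mul_nonneg (hp_nonneg k w) (hpow w).le)
    ⟨w, Finset.mem_univ _, mul_pos hw (hpow w)⟩

/-! ### The upper bound -/

/-- Chernoff's bound: `P(G ∈ window)` is at most `exp (-k (α x - |α| ε))` times the `α`-th moment. -/
theorem chernoff {m : ℕ} {p : (k : ℕ) → (Fin k → Fin m) → ℝ}
    (hp_nonneg : ∀ k w, 0 ≤ p k w) (hp_sum : ∀ k, ∑ w, p k w = 1)
    {G : (k : ℕ) → (Fin k → Fin m) → ℕ} (hG : ∀ k w, 1 ≤ G k w) {α L x c : ℝ}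
    (h : Tendsto (fun k : ℕ => (k : ℝ)⁻¹ * Real.log (∑ w, p k w * (G k w : ℝ) ^ α)) atTop (𝓝 L))
    (hc : L - x * α < c) :
    ∃ ε₀ > 0, ∀ ε < ε₀, ∀ᶠ k : ℕ in atTop, ∑ w ∈ gWin G k x ε, p k w ≤ Real.exp (k * c) := by
  set d := c - (L - x * α) with hd
  have hd0 : 0 < d := by linarith
  refine ⟨d / 2 / (|α| + 1), by positivity, fun ε hε => ?_⟩
  have hαε : |α| * ε ≤ d / 2 := by
    rw [lt_div_iff₀ (by positivity)] at hε
    rcases le_total ε 0 with h0 | h0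
    · nlinarith [abs_nonneg α]
    · nlinarith
  filter_upwards [eventually_exp_bounds (moment_pos hp_nonneg hp_sum hG α) h (half_pos hd0),
    eventually_gt_atTop 0] with k hk hk0
  have hpow : ∀ w, (0 : ℝ) < (G k w : ℝ) ^ α := fun w =>
    Real.rpow_pos_of_pos (by exact_mod_cast hG k w) α
  have h1 : Real.exp (k * (α * x - |α| * ε)) * ∑ w ∈ gWin G k x ε, p k w
      ≤ ∑ w, p k w * (G k w : ℝ) ^ α := by
    calc _ = ∑ w ∈ gWin G k x ε, p k w * Real.exp (k * (α * x - |α| * ε)) := by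
          rw [← Finset.sum_mul, mul_comm]
      _ ≤ ∑ w ∈ gWin G k x ε, p k w * (G k w : ℝ) ^ α :=
          Finset.sum_le_sum fun w hw => mul_le_mul_of_nonneg_left
            (rpow_bounds hk0 (hG k w) hw α).1 (hp_nonneg k w)
      _ ≤ _ := Finset.sum_le_sum_of_subset_of_nonneg (Finset.subset_univ _)
          fun w _ _ => mul_nonneg (hp_nonneg k w) (hpow w).le
  have h2 : Real.exp (k * (L + d / 2)) ≤ Real.exp (k * (α * x - |α| * ε)) * Real.exp (k * c) := by
    rw [← Real.exp_add, Real.exp_le_exp, ← mul_add]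
    exact mul_le_mul_of_nonneg_left (by linarith) (Nat.cast_nonneg k)
  exact le_of_mul_le_mul_left (h1.trans (hk.2.trans h2)) (Real.exp_pos _)

/-! ### The lower bound at exposed points -/

/-- Under the measure tilted by `G ^ α`, the normalised log-guesswork concentrates at `y = Λ'(α)`:
the words outside the window around `y` contribute an exponentially negligible part of the
`α`-th moment, by Chernoff bounds with the moments of orders `α ± t`. -/
theorem tilted_mass {m : ℕ} {p : (k : ℕ) → (Fin k → Fin m) → ℝ}
    (hp_nonneg : ∀ k w, 0 ≤ p k w) (hp_sum : ∀ k, ∑ w, p k w = 1)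
    {G : (k : ℕ) → (Fin k → Fin m) → ℕ} (hG : ∀ k w, 1 ≤ G k w) {Λ : ℝ → ℝ}
    (h_sCGF : ∀ α : ℝ, -1 < α →
      Tendsto (fun k : ℕ => (k : ℝ)⁻¹ *
          Real.log (∑ w, p k w * (G k w : ℝ) ^ α)) atTop (𝓝 (Λ α)))
    {α y ε δ : ℝ} (hα : -1 < α) (hy : HasDerivAt Λ y α) (hε : 0 < ε) (hδ : 0 < δ) :
    ∀ᶠ k : ℕ in atTop, Real.exp (k * (Λ α - δ)) ≤
      ∑ w ∈ gWin G k y ε, p k w * (G k w : ℝ) ^ α := by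
  obtain ⟨t, ht0, ht1, ht2, ht3⟩ : ∃ t > 0, -1 < α - t ∧ Λ (α + t) ≤ Λ α + t * (y + ε / 4) ∧
      Λ (α - t) ≤ Λ α - t * (y - ε / 4) := by
    have h1 := hy.isLittleO.def (show (0 : ℝ) < ε / 4 by positivity)
    rw [Metric.eventually_nhds_iff] at h1
    obtain ⟨r, hr, h1⟩ := h1
    have hα' : 0 < α + 1 := by linarith
    refine ⟨min (r / 2) ((α + 1) / 2), by positivity, ?_, ?_, ?_⟩
    · linarith [min_le_right (r / 2) ((α + 1) / 2)]
    all_goals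
      set t := min (r / 2) ((α + 1) / 2)
      have ht : 0 < t := by positivity
      have htr : t < r := (min_le_left _ _).trans_lt (by linarith)
    · have h2 := h1 (y := α + t) (by simpa [Real.dist_eq, abs_of_pos ht] using htr)
      simp only [add_sub_cancel_left, smul_eq_mul, Real.norm_eq_abs, abs_of_pos ht] at h2
      have h3 := (abs_le.1 h2).2
      linarith
    · have h2 := h1 (y := α - t) (by simpa [Real.dist_eq, abs_of_pos ht] using htr)
      simp only [sub_sub_cancel_left, smul_eq_mul, Real.norm_eq_abs, abs_neg, abs_of_pos ht] at h2
      have h3 := (abs_le.1 h2).2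
      linarith
  have hη : 0 < t * ε / 4 := by positivity
  set δ' := min (δ / 2) (t * ε / 4) with hδ'
  have hδ'0 : 0 < δ' := by positivity
  have hδ'1 : δ' ≤ δ / 2 := min_le_left _ _
  have hδ'2 : δ' ≤ t * ε / 4 := min_le_right _ _
  have pos := fun a => moment_pos hp_nonneg hp_sum hG a
  filter_upwards [eventually_exp_bounds (pos α) (h_sCGF α hα) hδ'0,
    eventually_exp_bounds (pos (α + t)) (h_sCGF (α + t) (by linarith)) hη,
    eventually_exp_bounds (pos (α - t)) (h_sCGF (α - t) ht1) hη,
    eventually_mul_exp_le (show Λ α - δ < Λ α - δ' by linarith) 2,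
    eventually_mul_exp_le (show Λ α - t * ε / 2 < Λ α - δ' by linarith) 4,
    eventually_gt_atTop 0] with k hS hSp hSm h2 h4 hk0
  have hk' : (0 : ℝ) ≤ k := Nat.cast_nonneg k
  have hpow : ∀ w (a : ℝ), (0 : ℝ) < (G k w : ℝ) ^ a := fun w a =>
    Real.rpow_pos_of_pos (by exact_mod_cast hG k w) a
  have hout : ∀ w ∉ gWin G k y ε, (G k w : ℝ) ^ α ≤
      Real.exp (-(k * t * (y + ε))) * (G k w : ℝ) ^ (α + t) +
        Real.exp (k * t * (y - ε)) * (G k w : ℝ) ^ (α - t) := by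
    intro w hw
    rw [mem_gWin hk0, not_and_or, not_lt, not_lt] at hw
    simp only [rpow_eq_exp (hG k w), ← Real.exp_add]
    rcases hw with hw | hw
    · refine le_trans ?_ (le_add_of_nonneg_left (Real.exp_pos _).le)
      rw [Real.exp_le_exp]
      nlinarith [mul_le_mul_of_nonneg_left hw ht0.le]
    · refine le_trans ?_ (le_add_of_nonneg_right (Real.exp_pos _).le)
      rw [Real.exp_le_exp]
      nlinarith [mul_le_mul_of_nonneg_left hw ht0.le]
  have hsplit : ∑ w, p k w * (G k w : ℝ) ^ α ≤ ∑ w ∈ gWin G k y ε, p k w * (G k w : ℝ) ^ α +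
      (Real.exp (-(k * t * (y + ε))) * ∑ w, p k w * (G k w : ℝ) ^ (α + t) +
        Real.exp (k * t * (y - ε)) * ∑ w, p k w * (G k w : ℝ) ^ (α - t)) := by
    rw [← Finset.sum_add_sum_compl (gWin G k y ε)]
    gcongr
    calc ∑ w ∈ (gWin G k y ε)ᶜ, p k w * (G k w : ℝ) ^ α
        ≤ ∑ w ∈ (gWin G k y ε)ᶜ, p k w *
            (Real.exp (-(k * t * (y + ε))) * (G k w : ℝ) ^ (α + t) +
            Real.exp (k * t * (y - ε)) * (G k w : ℝ) ^ (α - t)) :=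
          Finset.sum_le_sum fun w hw => mul_le_mul_of_nonneg_left
            (hout w (Finset.mem_compl.1 hw)) (hp_nonneg k w)
      _ ≤ ∑ w, p k w *
            (Real.exp (-(k * t * (y + ε))) * (G k w : ℝ) ^ (α + t) +
            Real.exp (k * t * (y - ε)) * (G k w : ℝ) ^ (α - t)) :=
          Finset.sum_le_sum_of_subset_of_nonneg (Finset.subset_univ _) fun w _ _ =>
            mul_nonneg (hp_nonneg k w) (add_nonneg
              (mul_nonneg (Real.exp_pos _).le (hpow w _).le)
              (mul_nonneg (Real.exp_pos _).le (hpow w _).le))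
      _ = _ := by
          rw [Finset.mul_sum, Finset.mul_sum, ← Finset.sum_add_distrib]
          exact Finset.sum_congr rfl fun w _ => by ring
  have hp' : Real.exp (-(k * t * (y + ε))) * ∑ w, p k w * (G k w : ℝ) ^ (α + t) ≤
      Real.exp (k * (Λ α - t * ε / 2)) := by
    refine (mul_le_mul_of_nonneg_left hSp.2 (Real.exp_pos _).le).trans ?_
    rw [← Real.exp_add, Real.exp_le_exp]
    nlinarith [mul_le_mul_of_nonneg_left ht2 hk']
  have hm' : Real.exp (k * t * (y - ε)) * ∑ w, p k w * (G k w : ℝ) ^ (α - t) ≤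
      Real.exp (k * (Λ α - t * ε / 2)) := by
    refine (mul_le_mul_of_nonneg_left hSm.2 (Real.exp_pos _).le).trans ?_
    rw [← Real.exp_add, Real.exp_le_exp]
    nlinarith [mul_le_mul_of_nonneg_left ht3 hk']
  linarith [hS.1]

/-- The lower bound near `y = Λ'(α)`: the tilted mass is transferred back to `p`, since `G ^ α` is
nearly constant on a narrow window. -/
theorem lower_exposed {m : ℕ} {p : (k : ℕ) → (Fin k → Fin m) → ℝ}
    (hp_nonneg : ∀ k w, 0 ≤ p k w) (hp_sum : ∀ k, ∑ w, p k w = 1)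
    {G : (k : ℕ) → (Fin k → Fin m) → ℕ} (hG : ∀ k w, 1 ≤ G k w) {Λ : ℝ → ℝ}
    (h_sCGF : ∀ α : ℝ, -1 < α →
      Tendsto (fun k : ℕ => (k : ℝ)⁻¹ *
          Real.log (∑ w, p k w * (G k w : ℝ) ^ α)) atTop (𝓝 (Λ α)))
    {α y x ε c : ℝ} (hα : -1 < α) (hy : HasDerivAt Λ y α) (hx : |y - x| < ε)
    (hc : c < Λ α - α * y) :
    ∀ᶠ k : ℕ in atTop, Real.exp (k * c) ≤ ∑ w ∈ gWin G k x ε, p k w := by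
  set d := Λ α - α * y - c with hd
  have hd0 : 0 < d := by linarith
  -- A window around `y` narrow enough to fit in the one around `x` and to cost at most `d / 2`.
  set e := min (ε - |y - x|) (d / 2 / (|α| + 1)) with he
  have he0 : 0 < e := lt_min (by linarith) (by positivity)
  have he1 : e ≤ ε - |y - x| := min_le_left _ _
  have he2 : |α| * e ≤ d / 2 := by
    have : e ≤ d / 2 / (|α| + 1) := min_le_right _ _
    rw [le_div_iff₀ (by positivity)] at this
    nlinarith
  filter_upwards [tilted_mass hp_nonneg hp_sum hG h_sCGF hα hy he0 (half_pos hd0),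
    eventually_gt_atTop 0] with k hk hk0
  have hk' : (0 : ℝ) ≤ k := Nat.cast_nonneg k
  have hsub : gWin G k y e ⊆ gWin G k x ε := by
    intro w hw
    rw [mem_gWin hk0] at hw ⊢
    have h1 := abs_le.1 (le_refl |y - x|)
    constructor
    · exact (mul_le_mul_of_nonneg_left (by linarith [h1.1]) hk').trans_lt hw.1
    · exact hw.2.trans_le (mul_le_mul_of_nonneg_left (by linarith [h1.2]) hk')
  have h1 : ∑ w ∈ gWin G k y e, p k w * (G k w : ℝ) ^ α ≤
      Real.exp (k * (α * y + |α| * e)) * ∑ w ∈ gWin G k x ε, p k w := by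
    calc _ ≤ ∑ w ∈ gWin G k y e, p k w * Real.exp (k * (α * y + |α| * e)) :=
          Finset.sum_le_sum fun w hw => mul_le_mul_of_nonneg_left
            (rpow_bounds hk0 (hG k w) hw α).2 (hp_nonneg k w)
      _ ≤ ∑ w ∈ gWin G k x ε, p k w * Real.exp (k * (α * y + |α| * e)) :=
          Finset.sum_le_sum_of_subset_of_nonneg hsub
            fun w _ _ => mul_nonneg (hp_nonneg k w) (Real.exp_pos _).le
      _ = _ := by rw [← Finset.sum_mul, mul_comm]
  have h2 : Real.exp (k * (α * y + |α| * e)) * Real.exp (k * c) ≤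
      Real.exp (k * (Λ α - d / 2)) := by
    rw [← Real.exp_add, Real.exp_le_exp, ← mul_add]
    exact mul_le_mul_of_nonneg_left (by linarith) hk'
  exact le_of_mul_le_mul_left (h2.trans (hk.trans h1)) (Real.exp_pos _)

/-! ### The lower bound on the linear part of the rate function -/

/-- If `x < y = Λ'(α)`, some word with guesswork about `exp (k y)` has probability at least about
`exp (k (Λ(α) - (1 + α) y))`. By monotonicity so does every word guessed earlier, and about
`exp (k x)` of these lie in the window around `x`. -/
theorem lower_linear {m : ℕ} {p : (k : ℕ) → (Fin k → Fin m) → ℝ}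
    (hp_nonneg : ∀ k w, 0 ≤ p k w) (hp_sum : ∀ k, ∑ w, p k w = 1)
    {G : (k : ℕ) → (Fin k → Fin m) → ℕ}
    (hG_bij : ∀ k, Set.BijOn (G k) Set.univ (Set.Icc 1 (m ^ k)))
    (hG_mono : ∀ k (w w' : Fin k → Fin m), G k w < G k w' → p k w' ≤ p k w) {Λ : ℝ → ℝ}
    (h_sCGF : ∀ α : ℝ, -1 < α →
      Tendsto (fun k : ℕ => (k : ℝ)⁻¹ *
          Real.log (∑ w, p k w * (G k w : ℝ) ^ α)) atTop (𝓝 (Λ α)))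
    {α y x ε c : ℝ} (hα : -1 < α) (hy : HasDerivAt Λ y α) (hx0 : 0 ≤ x) (hxy : x < y)
    (hε : 0 < ε) (hc : c < x + Λ α - (1 + α) * y) :
    ∀ᶠ k : ℕ in atTop, Real.exp (k * c) ≤ ∑ w ∈ gWin G k x ε, p k w := by
  have hG : ∀ k w, 1 ≤ G k w := fun k w => ((hG_bij k).mapsTo (Set.mem_univ w)).1
  set d := x + Λ α - (1 + α) * y - c with hd
  have hd0 : 0 < d := by linarith
  set e := min ((y - x) / 2) (d / 2 / (|α| + 1)) with he
  have he0 : 0 < e := lt_min (by linarith) (by positivity)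
  have he1 : e ≤ (y - x) / 2 := min_le_left _ _
  have he2 : (|α| + 1) * e ≤ d / 2 := by
    have : e ≤ d / 2 / (|α| + 1) := min_le_right _ _
    rw [le_div_iff₀ (by positivity)] at this
    linarith
  set r := min ε ((y - x) / 2) with hr
  have hr0 : 0 < r := lt_min hε (by linarith)
  have hr1 : r ≤ ε := min_le_left _ _
  have hr2 : r ≤ (y - x) / 2 := min_le_right _ _
  filter_upwards [tilted_mass hp_nonneg hp_sum hG h_sCGF hα hy he0 (half_pos hd0),
    eventually_mul_exp_le (show x < x + r by linarith) 4,
    eventually_gt_atTop 0] with k hk h4 hk0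
  have hk1 : (0 : ℝ) < k := by exact_mod_cast hk0
  have hk' : (0 : ℝ) ≤ k := hk1.le
  -- The window around `y` has at most `exp (k (y + e))` words, so one of them carries the average.
  obtain ⟨w₀, hw₀, hpw₀⟩ : ∃ w₀ ∈ gWin G k y e,
      Real.exp (k * (Λ α - d / 2 - (y + e))) ≤ p k w₀ * (G k w₀ : ℝ) ^ α := by
    apply Finset.exists_le_of_sum_le
    · by_contra hne
      rw [Finset.not_nonempty_iff_eq_empty] at hne
      rw [hne, Finset.sum_empty] at hk
      exact absurd hk (not_le.2 (Real.exp_pos _))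
    · refine le_trans ?_ hk
      have hcard : (gWin G k y e).card ≤ ⌊Real.exp (k * (y + e))⌋₊ := by
        rw [← Nat.add_sub_cancel (n := ⌊Real.exp (k * (y + e))⌋₊) (m := 1), ← Nat.card_Icc]
        apply Finset.card_le_card_of_injOn (G k)
        · intro w hw
          have h1 := ((mem_gWin hk0).1 hw).2
          rw [Real.log_lt_iff_lt_exp (by exact_mod_cast hG k w)] at h1
          exact Finset.mem_coe.2 (Finset.mem_Icc.2 ⟨hG k w, Nat.le_floor h1.le⟩)
        · exact (hG_bij k).injOn.mono (Set.subset_univ _)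
      have hcard' : ((gWin G k y e).card : ℝ) ≤ Real.exp (k * (y + e)) :=
        (Nat.cast_le.2 hcard).trans (Nat.floor_le (Real.exp_pos _).le)
      rw [Finset.sum_const, nsmul_eq_mul]
      refine (mul_le_mul_of_nonneg_right hcard' (Real.exp_pos _).le).trans_eq ?_
      rw [← Real.exp_add]; congr 1; ring
  have hq : Real.exp (k * (c - x)) ≤ p k w₀ := by
    have h1 := hpw₀.trans (mul_le_mul_of_nonneg_left (rpow_bounds hk0 (hG k w₀) hw₀ α).2
      (hp_nonneg k w₀))
    have h2 : Real.exp (k * (c - x)) * Real.exp (k * (α * y + |α| * e)) ≤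
        Real.exp (k * (Λ α - d / 2 - (y + e))) := by
      rw [← Real.exp_add, Real.exp_le_exp, ← mul_add]
      exact mul_le_mul_of_nonneg_left (by linarith) hk'
    exact le_of_mul_le_mul_right (h2.trans h1) (Real.exp_pos _)
  have hGw₀ : Real.exp (k * (x + r)) < G k w₀ := by
    rw [← Real.lt_log_iff_exp_lt (by exact_mod_cast hG k w₀)]
    exact (mul_le_mul_of_nonneg_left (by linarith) hk').trans_lt ((mem_gWin hk0).1 hw₀).1
  -- The words guessed at positions `N, …, 2N - 1` supply the required mass near `x`.
  set N := ⌈Real.exp (k * x)⌉₊ with hN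
  have hN1 : Real.exp (k * x) ≤ N := Nat.le_ceil _
  have hN2 : (N : ℝ) < Real.exp (k * x) + 1 := Nat.ceil_lt_add_one (Real.exp_pos _).le
  have hone : 1 ≤ Real.exp (k * x) := Real.one_le_exp (by positivity)
  have hNpos : 1 ≤ N := by exact_mod_cast hone.trans hN1
  have h2N : (2 * N : ℝ) < Real.exp (k * (x + r)) := by linarith
  set T : Finset (Fin k → Fin m) := Finset.univ.filter (fun w => G k w ∈ Finset.Ico N (2 * N))
    with hT
  have hTlt : ∀ w ∈ T, N ≤ G k w ∧ (G k w : ℝ) < Real.exp (k * (x + r)) := by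
    intro w hw
    simp only [hT, Finset.mem_filter, Finset.mem_univ, true_and, Finset.mem_Ico] at hw
    refine ⟨hw.1, lt_trans ?_ h2N⟩
    exact_mod_cast hw.2
  have hTcard : N ≤ T.card := by
    have h1 : (Finset.Ico N (2 * N)).card ≤ T.card := by
      apply Finset.card_le_card_of_surjOn (G k)
      intro n hn
      have hn' := Finset.mem_Ico.1 (Finset.mem_coe.1 hn)
      have hnm : n ≤ m ^ k := by
        refine le_trans ?_ ((hG_bij k).mapsTo (Set.mem_univ w₀)).2
        have : (n : ℝ) < 2 * N := by exact_mod_cast hn'.2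
        have : (n : ℝ) < G k w₀ := by linarith
        exact_mod_cast this.le
      obtain ⟨w, -, hw⟩ := (hG_bij k).surjOn (show n ∈ Set.Icc 1 (m ^ k) from
        ⟨hNpos.trans hn'.1, hnm⟩)
      refine ⟨w, ?_, hw⟩
      simp only [hT, Finset.coe_filter, Finset.mem_univ, true_and, Set.mem_ofPred_eq, hw]
      exact Finset.mem_coe.1 hn
    rw [Nat.card_Ico] at h1
    omega
  have hTsub : T ⊆ gWin G k x ε := by
    intro w hw
    obtain ⟨h1, h2⟩ := hTlt w hw
    have hpos : (0 : ℝ) < G k w := by exact_mod_cast hG k w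
    rw [mem_gWin hk0]
    constructor
    · rw [Real.lt_log_iff_exp_lt hpos]
      refine lt_of_lt_of_le ?_ (hN1.trans (Nat.cast_le.2 h1))
      rw [Real.exp_lt_exp]
      exact mul_lt_mul_of_pos_left (by linarith) hk1
    · rw [Real.log_lt_iff_lt_exp hpos]
      refine h2.trans_le ?_
      rw [Real.exp_le_exp]
      exact mul_le_mul_of_nonneg_left (by linarith) hk'
  calc Real.exp (k * c) = Real.exp (k * x) * Real.exp (k * (c - x)) := by
        rw [← Real.exp_add]; congr 1; ring
    _ ≤ T.card * Real.exp (k * (c - x)) :=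
        mul_le_mul_of_nonneg_right (hN1.trans (Nat.cast_le.2 hTcard)) (Real.exp_pos _).le
    _ = T.card • Real.exp (k * (c - x)) := (nsmul_eq_mul _ _).symm
    _ ≤ ∑ w ∈ T, p k w := by
        refine Finset.card_nsmul_le_sum _ _ _ fun w hw => hq.trans (hG_mono k w w₀ ?_)
        have := (hTlt w hw).2.trans hGw₀
        exact_mod_cast this
    _ ≤ _ := Finset.sum_le_sum_of_subset_of_nonneg hTsub fun w _ _ => hp_nonneg k w

/-! ### The cumulant function near `-1` -/

/-- The Rényi form of `Λ` sandwiches it between `p₁` and `p₁ + (1 + α) log m`; in particular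
`Λ(α) → p₁` as `α ↓ -1`. -/
theorem renyi_bounds {m : ℕ} (hm : 2 ≤ m) {p : (k : ℕ) → (Fin k → Fin m) → ℝ}
    (hp_nonneg : ∀ k w, 0 ≤ p k w) (hp_sum : ∀ k, ∑ w, p k w = 1) {α L p₁ : ℝ} (hα : -1 < α)
    (h : Tendsto (fun k : ℕ => (k : ℝ)⁻¹ * (1 + α) *
          Real.log (∑ w, p k w ^ (1 / (1 + α)))) atTop (𝓝 L))
    (hp₁ : Tendsto (fun k : ℕ => (k : ℝ)⁻¹ * Real.log (⨆ w, p k w)) atTop (𝓝 p₁)) :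
    p₁ ≤ L ∧ L ≤ p₁ + (1 + α) * Real.log m := by
  have ha : 0 < 1 + α := by linarith
  have hm0 : (0 : ℝ) < m := by exact_mod_cast (by omega : 0 < m)
  have key : ∀ k : ℕ, 0 < k →
      Real.log (⨆ w, p k w) ≤ (1 + α) * Real.log (∑ w, p k w ^ (1 / (1 + α))) ∧
      (1 + α) * Real.log (∑ w, p k w ^ (1 / (1 + α))) ≤
        Real.log (⨆ w, p k w) + k * ((1 + α) * Real.log m) := by
    intro k _
    have hle : ∀ w, p k w ≤ ⨆ w, p k w := fun w => le_ciSup (Set.finite_range _).bddAbove w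
    obtain ⟨w, -, hw⟩ : ∃ w ∈ Finset.univ, 0 < p k w := by
      apply Finset.exists_lt_of_sum_lt
      simp [hp_sum]
    have hM : 0 < ⨆ w, p k w := hw.trans_le (hle w)
    have : Nonempty (Fin k → Fin m) := ⟨w⟩
    obtain ⟨w₁, hw₁⟩ := exists_eq_ciSup_of_finite (f := p k)
    set M := ⨆ w, p k w
    have hMpow : 0 < M ^ (1 / (1 + α)) := Real.rpow_pos_of_pos hM _
    have hlogM : (1 + α) * Real.log (M ^ (1 / (1 + α))) = Real.log M := by
      rw [Real.log_rpow hM]; field_simp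
    have h1 : M ^ (1 / (1 + α)) ≤ ∑ w, p k w ^ (1 / (1 + α)) := by
      rw [← hw₁]
      exact Finset.single_le_sum (f := fun w => p k w ^ (1 / (1 + α)))
        (fun w _ => Real.rpow_nonneg (hp_nonneg k w) _) (Finset.mem_univ w₁)
    have h2 : ∑ w, p k w ^ (1 / (1 + α)) ≤ (m : ℝ) ^ k * M ^ (1 / (1 + α)) := by
      calc _ ≤ ∑ _w : Fin k → Fin m, M ^ (1 / (1 + α)) := Finset.sum_le_sum fun w _ =>
            Real.rpow_le_rpow (hp_nonneg k w) (hle w) (by positivity)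
        _ = _ := by simp
    constructor
    · rw [← hlogM]
      exact mul_le_mul_of_nonneg_left (Real.log_le_log hMpow h1) ha.le
    · have h3 := mul_le_mul_of_nonneg_left (Real.log_le_log (hMpow.trans_le h1) h2) ha.le
      rw [Real.log_mul (by positivity) hMpow.ne', Real.log_pow, mul_add, hlogM] at h3
      linarith
  constructor
  · refine le_of_tendsto_of_tendsto hp₁ h ?_
    filter_upwards [eventually_gt_atTop 0] with k hk
    have hk' : (0 : ℝ) < k := by exact_mod_cast hk
    rw [mul_assoc]
    exact mul_le_mul_of_nonneg_left (key k hk).1 (inv_pos.2 hk').le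
  · refine le_of_tendsto_of_tendsto h (hp₁.add_const _) ?_
    filter_upwards [eventually_gt_atTop 0] with k hk
    have hk' : (0 : ℝ) < k := by exact_mod_cast hk
    rw [mul_assoc]
    refine (mul_le_mul_of_nonneg_left (key k hk).2 (inv_pos.2 hk').le).trans_eq ?_
    field_simp

/-! ### Locating `x` relative to the range of `Λ'` -/

/-- If `Λ' < x` everywhere and `x α - Λ(α)` is bounded above, then `Λ'` comes arbitrarily close to
`x` on the positive half-line, since `x α - Λ(α)` cannot grow linearly. -/
theorem exists_deriv_near {Λ Λ' : ℝ → ℝ} (h_deriv : ∀ α : ℝ, -1 < α → HasDerivAt Λ (Λ' α) α)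
    {x c ε : ℝ} (hε : 0 < ε) (hc : ∀ α, -1 < α → c < Λ α - x * α) :
    ∃ α > 0, x - Λ' α < ε := by
  have hf : ∀ a, -1 < a → HasDerivAt (fun α => x * α - Λ α) (x - Λ' a) a := fun a ha =>
    (hasDerivAt_const_mul x).sub (h_deriv a ha)
  have hN : 0 < (|Λ 0 - c| + 1) / ε := by positivity
  set N := (|Λ 0 - c| + 1) / ε with hNdef
  have hNε : N * ε = |Λ 0 - c| + 1 := by rw [hNdef]; field_simp
  obtain ⟨ξ, hξ, hslope⟩ := exists_hasDerivAt_eq_slope (fun α => x * α - Λ α)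
    (fun α => x - Λ' α) hN
    (fun a ha => (hf a (by linarith [ha.1])).continuousAt.continuousWithinAt)
    (fun a ha => hf a (by linarith [ha.1]))
  refine ⟨ξ, hξ.1, ?_⟩
  rw [hslope, div_lt_iff₀ (by linarith)]
  have := hc N (by linarith)
  have := le_abs_self (Λ 0 - c)
  linarith

/-- If `Λ' > x ≥ 0` everywhere, then `(1 + α) Λ'(α)` is arbitrarily small at suitable `α`,
because it is controlled by the increments of `Λ` near `-1`, where `Λ` tends to `p₁`. -/
theorem exists_near_neg_one {m : ℕ} {Λ Λ' : ℝ → ℝ} {p₁ x c : ℝ}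
    (h_deriv : ∀ α : ℝ, -1 < α → HasDerivAt Λ (Λ' α) α)
    (hΛ : ∀ α, -1 < α → p₁ ≤ Λ α ∧ Λ α ≤ p₁ + (1 + α) * Real.log m)
    (hx0 : 0 ≤ x) (hx : ∀ α, -1 < α → x < Λ' α) (hc : c < x + p₁) :
    ∃ α, -1 < α ∧ c < x + Λ α - (1 + α) * Λ' α := by
  have hlog : 0 ≤ Real.log m := Real.log_natCast_nonneg m
  have hd0 : 0 < x + p₁ - c := by linarith
  set t := (x + p₁ - c) / (4 * Real.log m + 1) with ht
  have ht0 : 0 < t := by positivity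
  have htm : t * (4 * Real.log m + 1) = x + p₁ - c := by
    rw [ht]; field_simp
  obtain ⟨ξ, hξ, hslope⟩ := exists_hasDerivAt_eq_slope Λ Λ'
    (show -1 + t < -1 + 2 * t by linarith)
    (fun a ha => (h_deriv a (by linarith [ha.1])).continuousAt.continuousWithinAt)
    (fun a ha => h_deriv a (by linarith [ha.1]))
  have hξ1 : -1 < ξ := by linarith [hξ.1]
  refine ⟨ξ, hξ1, ?_⟩
  rw [eq_div_iff (by linarith)] at hslope
  have h1 := (hΛ (-1 + 2 * t) (by linarith)).2
  have h2 := (hΛ (-1 + t) (by linarith)).1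
  have h3 := (hΛ ξ hξ1).1
  have hpos : 0 < Λ' ξ := hx0.trans_lt (hx ξ hξ1)
  have h4 : (1 + ξ) * Λ' ξ ≤ 2 * t * Λ' ξ :=
    mul_le_mul_of_nonneg_right (by linarith [hξ.2]) hpos.le
  nlinarith

/-! ### Assembling the large deviation bounds -/

/-- The full lower bound: `x` is a value of `Λ'`, or lies above all of them, or below all of
them, by the intermediate value theorem. -/
theorem lower_bound {m : ℕ} {p : (k : ℕ) → (Fin k → Fin m) → ℝ}
    (hp_nonneg : ∀ k w, 0 ≤ p k w) (hp_sum : ∀ k, ∑ w, p k w = 1)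
    {G : (k : ℕ) → (Fin k → Fin m) → ℕ}
    (hG_bij : ∀ k, Set.BijOn (G k) Set.univ (Set.Icc 1 (m ^ k)))
    (hG_mono : ∀ k (w w' : Fin k → Fin m), G k w < G k w' → p k w' ≤ p k w) {Λ Λ' : ℝ → ℝ}
    (h_sCGF : ∀ α : ℝ, -1 < α →
      Tendsto (fun k : ℕ => (k : ℝ)⁻¹ *
          Real.log (∑ w, p k w * (G k w : ℝ) ^ α)) atTop (𝓝 (Λ α)))
    (h_deriv : ∀ α : ℝ, -1 < α → HasDerivAt Λ (Λ' α) α)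
    (h_deriv_cont : ContinuousOn Λ' (Set.Ioi (-1 : ℝ)))
    {p₁ : ℝ} (hΛ : ∀ α, -1 < α → p₁ ≤ Λ α ∧ Λ α ≤ p₁ + (1 + α) * Real.log m)
    {x c ε : ℝ} (hx0 : 0 ≤ x) (hε : 0 < ε) (hc : ∀ α, -1 < α → c < Λ α - x * α)
    (hc₁ : c < x + p₁) :
    ∀ᶠ k : ℕ in atTop, Real.exp (k * c) ≤ ∑ w ∈ gWin G k x ε, p k w := by
  have hG : ∀ k w, 1 ≤ G k w := fun k w => ((hG_bij k).mapsTo (Set.mem_univ w)).1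
  by_cases hex : ∃ α, -1 < α ∧ Λ' α = x
  · obtain ⟨α, hα, rfl⟩ := hex
    exact lower_exposed hp_nonneg hp_sum hG h_sCGF hα (h_deriv α hα) (by simpa using hε)
      (by linarith [hc α hα])
  · by_cases hbelow : ∃ α, -1 < α ∧ Λ' α < x
    · have hall : ∀ α, -1 < α → Λ' α < x := by
        intro β hβ
        by_contra hcon
        obtain ⟨α, hα, hlt⟩ := hbelow
        obtain ⟨γ, hγ, hγx⟩ := isPreconnected_Ioi.intermediate_value (Set.mem_Ioi.2 hα)
          (Set.mem_Ioi.2 hβ) h_deriv_cont ⟨hlt.le, not_lt.1 hcon⟩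
        exact hex ⟨γ, hγ, hγx⟩
      obtain ⟨α, hα0, hnear⟩ := exists_deriv_near h_deriv hε hc
      have hα : -1 < α := by linarith
      have hlt := hall α hα
      refine lower_exposed hp_nonneg hp_sum hG h_sCGF hα (h_deriv α hα) ?_ ?_
      · rw [abs_sub_comm, abs_of_pos (by linarith)]; exact hnear
      · have := hc α hα
        nlinarith
    · have hall : ∀ α, -1 < α → x < Λ' α := fun α hα =>
        lt_of_le_of_ne (not_lt.1 fun h => hbelow ⟨α, hα, h⟩) fun h => hex ⟨α, hα, h.symm⟩
      obtain ⟨α, hα, hcα⟩ := exists_near_neg_one h_deriv hΛ hx0 hall hc₁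
      exact lower_linear hp_nonneg hp_sum hG_bij hG_mono h_sCGF hα (h_deriv α hα) hx0
        (hall α hα) hε hcα

theorem le_inv_mul_log {k : ℕ} (hk : 0 < k) {c P : ℝ} (h : Real.exp (k * c) ≤ P) :
    (c : EReal) ≤ ((k : ℝ)⁻¹ : EReal) * ENNReal.log (ENNReal.ofReal P) := by
  have hk' : (0 : ℝ) < k := by exact_mod_cast hk
  have hP : 0 < P := (Real.exp_pos _).trans_le h
  rw [ENNReal.log_ofReal_of_pos hP, ← EReal.coe_inv, ← EReal.coe_mul, EReal.coe_le_coe_iff,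
    le_inv_mul_iff₀ hk']
  exact (Real.le_log_iff_exp_le hP).2 h

theorem inv_mul_log_le {k : ℕ} (hk : 0 < k) {c P : ℝ} (h : P ≤ Real.exp (k * c)) :
    ((k : ℝ)⁻¹ : EReal) * ENNReal.log (ENNReal.ofReal P) ≤ c := by
  have hk' : (0 : ℝ) < k := by exact_mod_cast hk
  rcases le_or_gt P 0 with hP | hP
  · rw [ENNReal.log_ofReal, if_pos hP, ← EReal.coe_inv, EReal.coe_mul_bot_of_pos (inv_pos.2 hk')]
    exact bot_le
  · rw [ENNReal.log_ofReal_of_pos hP, ← EReal.coe_inv, ← EReal.coe_mul, EReal.coe_le_coe_iff,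
      inv_mul_le_iff₀ hk']
    exact (Real.log_le_iff_le_exp hP).2 h

/-- **Guesswork, Theorem 1 (The large deviations of guesswork).**
Under Assumptions 1 and 2, `{k⁻¹ log G(W_k)}` satisfies a Large Deviation Principle with
rate function `Λ*`: for every `x ∈ [0, log m]`, both
`lim_{ε↓0} liminf_k k⁻¹ log P(k⁻¹ log G(W_k) ∈ (x-ε,x+ε))` and the corresponding
`limsup` exist and equal `-Λ*(x)` (in the extended reals, `log 0 = -∞`). -/
theorem guesswork_LDP
    (m : ℕ) (hm : 2 ≤ m)
    (p : (k : ℕ) → (Fin k → Fin m) → ℝ)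
    (hp_nonneg : ∀ k w, 0 ≤ p k w)
    (hp_sum : ∀ k, ∑ w, p k w = 1)
    (G : (k : ℕ) → (Fin k → Fin m) → ℕ)
    (hG_bij : ∀ k, Set.BijOn (G k) Set.univ (Set.Icc 1 (m ^ k)))
    (hG_mono : ∀ k (w w' : Fin k → Fin m), G k w < G k w' → p k w' ≤ p k w)
    (Λ Λ' : ℝ → ℝ)
    (h_sCGF : ∀ α : ℝ, -1 < α →
      Tendsto (fun k : ℕ => (k : ℝ)⁻¹ *
          Real.log (∑ w, p k w * (G k w : ℝ) ^ α)) atTop (𝓝 (Λ α)))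
    (h_deriv : ∀ α : ℝ, -1 < α → HasDerivAt Λ (Λ' α) α)
    (h_deriv_cont : ContinuousOn Λ' (Set.Ioi (-1 : ℝ)))
    (h_renyi : ∀ α : ℝ, -1 < α →
      Tendsto (fun k : ℕ => (k : ℝ)⁻¹ * (1 + α) *
          Real.log (∑ w, p k w ^ (1 / (1 + α)))) atTop (𝓝 (Λ α)))
    (p₁ : ℝ) (hp₁_le : p₁ ≤ 0)
    (hp₁ : Tendsto (fun k : ℕ => (k : ℝ)⁻¹ * Real.log (⨆ w, p k w)) atTop (𝓝 p₁)) :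
    ∀ x ∈ Set.Icc (0 : ℝ) (Real.log m),
      Tendsto (fun ε : ℝ =>
          liminf (fun k : ℕ => (((k : ℝ)⁻¹ : EReal)) *
              ENNReal.log (ENNReal.ofReal
                (∑ w ∈ Finset.univ.filter
                    (fun w => (k : ℝ)⁻¹ * Real.log (G k w) ∈ Set.Ioo (x - ε) (x + ε)),
                  p k w)))
            atTop)
        (𝓝[>] (0 : ℝ)) (𝓝 (-(guessworkRate Λ p₁ x)))
      ∧ Tendsto (fun ε : ℝ =>
          limsup (fun k : ℕ => (((k : ℝ)⁻¹ : EReal)) *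
              ENNReal.log (ENNReal.ofReal
                (∑ w ∈ Finset.univ.filter
                    (fun w => (k : ℝ)⁻¹ * Real.log (G k w) ∈ Set.Ioo (x - ε) (x + ε)),
                  p k w)))
            atTop)
        (𝓝[>] (0 : ℝ)) (𝓝 (-(guessworkRate Λ p₁ x))) := by
  intro x hx
  have hG : ∀ k w, 1 ≤ G k w := fun k w => ((hG_bij k).mapsTo (Set.mem_univ w)).1
  have hΛ : ∀ α, -1 < α → p₁ ≤ Λ α ∧ Λ α ≤ p₁ + (1 + α) * Real.log m := fun α hα =>
    renyi_bounds hm hp_nonneg hp_sum hα (h_renyi α hα) hp₁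
  have hle : ∀ α : ℝ, ((x * α - guessworkLambdaExt Λ p₁ α : ℝ) : EReal) ≤ guessworkRate Λ p₁ x :=
    fun α => le_iSup (fun α : ℝ => ((x * α - guessworkLambdaExt Λ p₁ α : ℝ) : EReal)) α
  have hlow : ∀ c : ℝ, (c : EReal) < -guessworkRate Λ p₁ x → ∀ ε > 0, ∀ᶠ k : ℕ in atTop,
      (c : EReal) ≤ ((k : ℝ)⁻¹ : EReal) *
        ENNReal.log (ENNReal.ofReal (∑ w ∈ gWin G k x ε, p k w)) := by
    intro c hc ε hε
    have hc' : ∀ α : ℝ, c < guessworkLambdaExt Λ p₁ α - x * α := by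
      intro α
      have h1 := (hle α).trans_lt (EReal.lt_neg_comm.1 hc)
      rw [← EReal.coe_neg, EReal.coe_lt_coe_iff] at h1
      linarith
    filter_upwards [lower_bound hp_nonneg hp_sum hG_bij hG_mono h_sCGF h_deriv h_deriv_cont hΛ
      hx.1 hε (c := c) (fun α hα => by
        simpa [guessworkLambdaExt, not_le.2 hα] using hc' α)
      (by have := hc' (-1); simp [guessworkLambdaExt] at this; linarith),
      eventually_gt_atTop 0] with k hk hk0
    exact le_inv_mul_log hk0 hk
  have hup : ∀ c : ℝ, -guessworkRate Λ p₁ x < (c : EReal) → ∃ ε₀ > 0, ∀ ε < ε₀,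
      ∀ᶠ k : ℕ in atTop, ((k : ℝ)⁻¹ : EReal) *
        ENNReal.log (ENNReal.ofReal (∑ w ∈ gWin G k x ε, p k w)) ≤ c := by
    intro c hc
    obtain ⟨α, hα, hαc⟩ : ∃ α, -1 < α ∧ Λ α - x * α < c := by
      obtain ⟨α, hα⟩ := lt_iSup_iff.1 (EReal.neg_lt_comm.1 hc)
      rw [← EReal.coe_neg, EReal.coe_lt_coe_iff] at hα
      by_cases hα1 : α ≤ -1
      · -- For `x ≥ 0` the exponents `α ≤ -1` do no better than the limit `α ↓ -1`.
        simp only [guessworkLambdaExt, if_pos hα1] at hα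
        have h1 : x * α ≤ x * (-1) := mul_le_mul_of_nonneg_left hα1 hx.1
        have hlog : 0 ≤ Real.log m := Real.log_natCast_nonneg m
        have hd : 0 < c - (x + p₁) := by linarith
        set t := (c - (x + p₁)) / (Real.log m + 1) with ht
        have ht0 : 0 < t := by positivity
        have htm : t * (Real.log m + 1) = c - (x + p₁) := by rw [ht]; field_simp
        refine ⟨-1 + t, by linarith, ?_⟩
        have h2 := (hΛ (-1 + t) (by linarith)).2
        nlinarith [mul_nonneg hx.1 ht0.le]
      · simp only [guessworkLambdaExt, if_neg hα1] at hα
        exact ⟨α, not_le.1 hα1, by linarith⟩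
    obtain ⟨ε₀, hε₀, h⟩ := chernoff hp_nonneg hp_sum hG (h_sCGF α hα) hαc
    refine ⟨ε₀, hε₀, fun ε hε => ?_⟩
    filter_upwards [h ε hε, eventually_gt_atTop 0] with k hk hk0
    exact inv_mul_log_le hk0 hk
  have hliminf : ∀ a < -guessworkRate Λ p₁ x, ∀ ε > 0, a < liminf (fun k : ℕ =>
      ((k : ℝ)⁻¹ : EReal) * ENNReal.log (ENNReal.ofReal (∑ w ∈ gWin G k x ε, p k w))) atTop := by
    intro a ha ε hε
    obtain ⟨c, hac, hc⟩ := EReal.lt_iff_exists_real_btwn.1 ha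
    exact hac.trans_le (le_liminf_of_le (h := hlow c hc ε hε))
  have hlimsup : ∀ a > -guessworkRate Λ p₁ x, ∃ ε₀ > 0, ∀ ε < ε₀, limsup (fun k : ℕ =>
      ((k : ℝ)⁻¹ : EReal) * ENNReal.log (ENNReal.ofReal (∑ w ∈ gWin G k x ε, p k w))) atTop
        < a := by
    intro a ha
    obtain ⟨c, hc, hca⟩ := EReal.lt_iff_exists_real_btwn.1 ha
    obtain ⟨ε₀, hε₀, h⟩ := hup c hc
    exact ⟨ε₀, hε₀, fun ε hε => (limsup_le_of_le (h := h ε hε)).trans_lt hca⟩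
  constructor
  · refine tendsto_order.2 ⟨fun a ha => ?_, fun a ha => ?_⟩
    · filter_upwards [self_mem_nhdsWithin] with ε hε
      exact hliminf a ha ε hε
    · obtain ⟨ε₀, hε₀, h⟩ := hlimsup a ha
      filter_upwards [mem_nhdsWithin_of_mem_nhds (Iio_mem_nhds hε₀)] with ε hε
      exact lt_of_le_of_lt liminf_le_limsup (h ε hε)
  · refine tendsto_order.2 ⟨fun a ha => ?_, fun a ha => ?_⟩
    · filter_upwards [self_mem_nhdsWithin] with ε hε
      exact (hliminf a ha ε hε).trans_le liminf_le_limsup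
    · obtain ⟨ε₀, hε₀, h⟩ := hlimsup a ha
      filter_upwards [mem_nhdsWithin_of_mem_nhds (Iio_mem_nhds hε₀)] with ε hε
      exact h ε hε
end

section
/- (Shannon entropy and guesswork.) Under Assumptions 1 and 2, the scaled expectation of the logarithm of the guesswork converges to the specific Shannon entropy: lim_{k→∞} (1/k) Σ_{w∈A^k} p_k(w) log G_k(w) = lim_{k→∞} (1/k) H(W_k), where H(W_k) = -Σ_{w∈A^k} p_k(w) log p_k(w) is the Shannon entropy of p_k; in particular both limits exist and equal Λ'(0). -/
open Filter Topology

/-!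
By Jensen's inequality, both scaled cumulant expressions lie above the line through the origin
whose slope is the corresponding scaled expectation: with `L k = k⁻¹ E(log G)` or
`L k = k⁻¹ H(W_k)`, one has `α * L k ≤ f α k`, where `f α k → Λ α` is the guesswork expression or the
Rényi entropy expression respectively. Since `Λ 0 = 0`, dividing by small `α > 0` bounds
`limsup L` by the right derivative of `Λ` at `0`, and dividing by small `α < 0` bounds `liminf L`
by the left derivative. Differentiability of `Λ` at `0` therefore forces `L k → Λ' 0`
(`tendsto_of_mul_le`).
-/

/-- Jensen's inequality for the exponential, in logarithmic form. -/
lemma sum_mul_le_log_sum_mul_exp {ι : Type*} [Fintype ι] (q t : ι → ℝ)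
    (hq : ∀ i, 0 ≤ q i) (hq1 : ∑ i, q i = 1) :
    ∑ i, q i * t i ≤ Real.log (∑ i, q i * Real.exp (t i)) := by
  have h := convexOn_exp.map_sum_le (t := Finset.univ) (w := q) (p := t)
    (fun i _ => hq i) hq1 (fun i _ => Set.mem_univ _)
  simp only [smul_eq_mul] at h
  exact (Real.le_log_iff_exp_le ((Real.exp_pos _).trans_le h)).2 h

/-- If the line of slope `L k` through the origin lies below `α ↦ f α k` for each `k`, and these
functions converge pointwise to a `Λ` that vanishes and is differentiable at `0`, then the slopes
converge to the derivative of `Λ` at `0`. -/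
lemma tendsto_of_mul_le {L : ℕ → ℝ} {f : ℝ → ℕ → ℝ} {Λ : ℝ → ℝ} {d : ℝ}
    (hL : ∀ α, -1 < α → ∀ k, α * L k ≤ f α k)
    (hf : ∀ α, -1 < α → Tendsto (f α) atTop (𝓝 (Λ α)))
    (h0 : Λ 0 = 0) (hd : HasDerivAt Λ d 0) : Tendsto L atTop (𝓝 d) := by
  have hs := hd.tendsto_slope_zero
  simp only [zero_add, h0, sub_zero, smul_eq_mul] at hs
  refine tendsto_order.2 ⟨fun b hb => ?_, fun b hb => ?_⟩
  · have h1 : ∀ᶠ t in 𝓝[<] (0 : ℝ), b < t⁻¹ * Λ t :=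
      (hs.mono_left (nhdsWithin_mono _ fun x hx => ne_of_lt hx)).eventually (lt_mem_nhds hb)
    have h2 : ∀ᶠ t in 𝓝[<] (0 : ℝ), -1 < t :=
      nhdsWithin_le_nhds (lt_mem_nhds (by norm_num))
    obtain ⟨t, ⟨h1, h2⟩, ht⟩ := ((h1.and h2).and self_mem_nhdsWithin).exists
    have ht : t < 0 := ht
    have h3 : Λ t < t * b := by
      have := mul_lt_mul_of_neg_left h1 ht
      rwa [mul_inv_cancel_left₀ ht.ne] at this
    filter_upwards [(hf t h2).eventually (gt_mem_nhds h3)] with k hk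
    exact lt_of_mul_lt_mul_of_nonpos_left ((hL t h2 k).trans_lt hk) ht.le
  · have h1 : ∀ᶠ t in 𝓝[>] (0 : ℝ), t⁻¹ * Λ t < b :=
      (hs.mono_left (nhdsWithin_mono _ fun x hx => ne_of_gt hx)).eventually (gt_mem_nhds hb)
    obtain ⟨t, h1, ht⟩ := (h1.and self_mem_nhdsWithin).exists
    have ht : 0 < t := ht
    have h2 : -1 < t := by linarith
    have h3 : Λ t < t * b := by
      have := mul_lt_mul_of_pos_left h1 ht
      rwa [mul_inv_cancel_left₀ ht.ne'] at this
    filter_upwards [(hf t h2).eventually (gt_mem_nhds h3)] with k hk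
    exact lt_of_mul_lt_mul_left ((hL t h2 k).trans_lt hk) ht.le

/-- **Guesswork, Corollary 2 (Shannon entropy and guesswork).**
Under Assumptions 1 and 2, the scaled expectation of the logarithm of the guesswork
converges, the specific Shannon entropy exists, and both equal `Λ'(0)`:
`lim_k k⁻¹ E(log G(W_k)) = lim_k k⁻¹ H(W_k) = Λ'(0)`. -/
theorem guesswork_shannon_entropy
    (m : ℕ) (hm : 2 ≤ m)
    (p : (k : ℕ) → (Fin k → Fin m) → ℝ)
    (hp_nonneg : ∀ k w, 0 ≤ p k w)
    (hp_sum : ∀ k, ∑ w, p k w = 1)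
    (G : (k : ℕ) → (Fin k → Fin m) → ℕ)
    (hG_bij : ∀ k, Set.BijOn (G k) Set.univ (Set.Icc 1 (m ^ k)))
    (hG_mono : ∀ k (w w' : Fin k → Fin m), G k w < G k w' → p k w' ≤ p k w)
    (Λ Λ' : ℝ → ℝ)
    (h_sCGF : ∀ α : ℝ, -1 < α →
      Tendsto (fun k : ℕ => (k : ℝ)⁻¹ *
          Real.log (∑ w, p k w * (G k w : ℝ) ^ α)) atTop (𝓝 (Λ α)))
    (h_deriv : ∀ α : ℝ, -1 < α → HasDerivAt Λ (Λ' α) α)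
    (h_deriv_cont : ContinuousOn Λ' (Set.Ioi (-1 : ℝ)))
    (h_renyi : ∀ α : ℝ, -1 < α →
      Tendsto (fun k : ℕ => (k : ℝ)⁻¹ * (1 + α) *
          Real.log (∑ w, p k w ^ (1 / (1 + α)))) atTop (𝓝 (Λ α)))
    (p₁ : ℝ) (hp₁_le : p₁ ≤ 0)
    (hp₁ : Tendsto (fun k : ℕ => (k : ℝ)⁻¹ * Real.log (⨆ w, p k w)) atTop (𝓝 p₁)) :
    Tendsto (fun k : ℕ => (k : ℝ)⁻¹ * ∑ w, p k w * Real.log (G k w))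
      atTop (𝓝 (Λ' 0))
    ∧ Tendsto (fun k : ℕ => (k : ℝ)⁻¹ * (-∑ w, p k w * Real.log (p k w)))
      atTop (𝓝 (Λ' 0)) := by
  have h0 : Λ 0 = 0 := by
    refine tendsto_nhds_unique (h_sCGF 0 (by norm_num)) ?_
    simp [hp_sum]
  have hd := h_deriv 0 (by norm_num)
  refine ⟨tendsto_of_mul_le ?_ h_sCGF h0 hd, tendsto_of_mul_le ?_ h_renyi h0 hd⟩
  · intro α _ k
    have hG : ∀ w, (0 : ℝ) < G k w := fun w => by
      exact_mod_cast ((hG_bij k).mapsTo (Set.mem_univ w)).1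
    have h := sum_mul_le_log_sum_mul_exp (p k) (fun w => Real.log (G k w) * α)
      (hp_nonneg k) (hp_sum k)
    simp only [← Real.rpow_def_of_pos (hG _), ← mul_assoc, ← Finset.sum_mul] at h
    calc α * ((k : ℝ)⁻¹ * ∑ w, p k w * Real.log (G k w))
        = (k : ℝ)⁻¹ * ((∑ w, p k w * Real.log (G k w)) * α) := by ring
      _ ≤ _ := mul_le_mul_of_nonneg_left h (by positivity)
  · intro α hα k
    have hα' : 0 < 1 + α := by linarith
    -- The exponent `1 / (1 + α)` is split as `1 + (1 / (1 + α) - 1)`, one factor `p` being the weight.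
    have h := sum_mul_le_log_sum_mul_exp (p k)
      (fun w => Real.log (p k w) * (1 / (1 + α) - 1)) (hp_nonneg k) (hp_sum k)
    have he : ∀ w, p k w * Real.exp (Real.log (p k w) * (1 / (1 + α) - 1))
        = p k w ^ (1 / (1 + α)) := fun w => by
      rcases (hp_nonneg k w).eq_or_lt with h | h
      · rw [← h, zero_mul, Real.zero_rpow (by positivity)]
      · rw [← Real.rpow_def_of_pos h, Real.rpow_sub_one h.ne', mul_div_cancel₀ _ h.ne']
    simp only [he, ← mul_assoc, ← Finset.sum_mul] at h
    calc α * ((k : ℝ)⁻¹ * (-∑ w, p k w * Real.log (p k w)))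
        = (k : ℝ)⁻¹ * (1 + α) *
          ((∑ w, p k w * Real.log (p k w)) * (1 / (1 + α) - 1)) := by
          field_simp
          ring
      _ ≤ _ := mul_le_mul_of_nonneg_left h (by positivity)
end

section
/- (The Golden Ratio and Markovian letters.) Let p₁₁, p₂₂ ∈ (0,1) and set p₁₂ = 1 - p₁₁, p₂₁ = 1 - p₂₂ (a 2×2 stochastic transition matrix with positive entries). For α > -1 put β = 1/(1+α) and define f(α) = (1+α) log [ (p₁₁^β + p₂₂^β)/2 + √((p₁₁^β - p₂₂^β)² + 4 (p₁₂ p₂₁)^β)/2 ] (so that the bracketed expression is the spectral radius of the matrix with entries p_{i,j}^β). Then the limit γ := lim_{α↓-1} f'(α) exists and γ ∈ {0, log φ, log 2}, where φ = (1+√5)/2 is the Golden Ratio, and no other values are possible. -/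
open Filter Topology

/-!
Put `t = 1 + α` and `c = √(p₁₂ p₂₁)`. The spectral radius is a homogeneous function `perronRoot` of
`(p₁₁ ^ (1/t), p₂₂ ^ (1/t), c ^ (1/t))`, so dividing the three bases by their maximum `m` changes
`f` only by the additive constant `log m` (`mul_log_perronRoot`). The bases then lie in `(0, 1]`
and one of them is `1`. For such a base `x`, as `t ↓ 0`, the power `x ^ (1/t)` tends to `1` or `0`
according as `x = 1` or `x < 1`, and `t` times its derivative tends to `0`.

Since `f' = log ρ + t ρ' / ρ` with `ρ` the normalised radius, it remains to see that `t ρ' → 0`.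
The radicand of `ρ` may tend to `0`, but by Cauchy–Schwarz the derivative of its square root
is bounded by the derivatives of the powers (`abs_radicand_deriv_le`). Hence `f'` tends to the
logarithm of `perronRoot` at a nonzero point of `{0, 1}³`, and this takes only the values
`1`, `φ` and `2`.
-/

/-- The Perron root of a nonnegative `2 × 2` matrix with diagonal entries `u`, `v` and
off-diagonal entries of product `w ^ 2`. -/
noncomputable def perronRoot (u v w : ℝ) : ℝ :=
  (u + v) / 2 + Real.sqrt ((u - v) ^ 2 + 4 * w ^ 2) / 2

lemma perronRoot_mul {m : ℝ} (hm : 0 ≤ m) (u v w : ℝ) :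
    perronRoot (m * u) (m * v) (m * w) = m * perronRoot u v w := by
  unfold perronRoot
  have h : (m * u - m * v) ^ 2 + 4 * (m * w) ^ 2 = m ^ 2 * ((u - v) ^ 2 + 4 * w ^ 2) := by ring
  rw [h, Real.sqrt_mul (sq_nonneg m), Real.sqrt_sq hm]
  ring

lemma perronRoot_pos {u v w : ℝ} (hu : 0 < u) (hv : 0 < v) : 0 < perronRoot u v w := by
  unfold perronRoot
  positivity

lemma hasDerivAt_rpow_one_div {x t : ℝ} (hx : 0 < x) (ht : 0 < t) :
    HasDerivAt (fun s : ℝ => x ^ (1 / s)) (-(x ^ (1 / t) * Real.log x / t ^ 2)) t := by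
  have h := (hasDerivAt_inv ht.ne').const_rpow hx
  simp only [one_div]
  convert h using 1
  field_simp

lemma tendsto_one_div_nhdsGT : Tendsto (fun t : ℝ => 1 / t) (𝓝[>] 0) atTop := by
  simpa only [one_div] using tendsto_inv_nhdsGT_zero (𝕜 := ℝ)

lemma tendsto_rpow_one_div {x : ℝ} (hx : 0 < x) (hx1 : x ≤ 1) :
    Tendsto (fun t : ℝ => x ^ (1 / t)) (𝓝[>] 0) (𝓝 (if x = 1 then 1 else 0)) := by
  split_ifs with h
  · simp [h]
  · exact (tendsto_rpow_atTop_of_base_lt_one x (by linarith) (lt_of_le_of_ne hx1 h)).comp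
      tendsto_one_div_nhdsGT

lemma tendsto_mul_deriv_rpow_one_div {x : ℝ} (hx : 0 < x) (hx1 : x ≤ 1) :
    Tendsto (fun t : ℝ => t * (-(x ^ (1 / t) * Real.log x / t ^ 2))) (𝓝[>] 0) (𝓝 0) := by
  rcases hx1.eq_or_lt with rfl | h
  · simp
  · have hl : 0 < -Real.log x := neg_pos.2 (Real.log_neg hx h)
    -- With `y = -log x / t`, the expression is `y * exp (-y)`.
    have h1 := (Real.tendsto_pow_mul_exp_neg_atTop_nhds_zero 1).comp
      (tendsto_one_div_nhdsGT.const_mul_atTop hl)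
    refine h1.congr' ?_
    filter_upwards [self_mem_nhdsWithin] with t ht
    have ht : 0 < t := ht
    simp only [Function.comp_apply, pow_one]
    rw [Real.rpow_def_of_pos hx, show -(-Real.log x * (1 / t)) = Real.log x * (1 / t) by ring]
    field_simp

/-- Cauchy–Schwarz bound on the derivative of `√((u - v) ^ 2 + 4 * w ^ 2)`, uniform in
`u, v, w`. -/
lemma abs_radicand_deriv_le (u v w u' v' w' : ℝ) :
    |(2 * (u - v) * (u' - v') + 8 * w * w') / (2 * Real.sqrt ((u - v) ^ 2 + 4 * w ^ 2))|
      ≤ |u' - v'| + 2 * |w'| := by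
  set r := Real.sqrt ((u - v) ^ 2 + 4 * w ^ 2) with hr
  have hr0 : 0 ≤ r := Real.sqrt_nonneg _
  have h1 : |u - v| ≤ r := Real.abs_le_sqrt (by nlinarith [sq_nonneg w])
  have h2 : |2 * w| ≤ r := Real.abs_le_sqrt (by nlinarith [sq_nonneg (u - v)])
  rw [abs_div, abs_of_nonneg (by positivity : 0 ≤ 2 * r)]
  refine div_le_of_le_mul₀ (by positivity) (by positivity) ?_
  calc |2 * (u - v) * (u' - v') + 8 * w * w'|
      ≤ |2 * (u - v) * (u' - v')| + |8 * w * w'| := abs_add_le _ _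
    _ = 2 * (|u - v| * |u' - v'|) + 4 * (|2 * w| * |w'|) := by
        simp only [abs_mul, abs_of_pos (by norm_num : (0 : ℝ) < 2),
          abs_of_pos (by norm_num : (0 : ℝ) < 8)]
        ring
    _ ≤ 2 * (r * |u' - v'|) + 4 * (r * |w'|) := by gcongr
    _ = (|u' - v'| + 2 * |w'|) * (2 * r) := by ring

lemma hasDerivAt_perronRoot {u v w : ℝ → ℝ} {u' v' w' t : ℝ} (hu : HasDerivAt u u' t)
    (hv : HasDerivAt v v' t) (hw : HasDerivAt w w' t) (hw0 : 0 < w t) :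
    HasDerivAt (fun s => perronRoot (u s) (v s) (w s))
      ((u' + v') / 2 + (2 * (u t - v t) * (u' - v') + 8 * w t * w') /
        (2 * Real.sqrt ((u t - v t) ^ 2 + 4 * w t ^ 2)) / 2) t := by
  unfold perronRoot
  have hD : HasDerivAt (fun s => (u s - v s) ^ 2 + 4 * w s ^ 2)
      (2 * (u t - v t) * (u' - v') + 8 * w t * w') t := by
    refine (((hu.sub hv).pow 2).add ((hw.pow 2).const_mul 4)).congr_deriv ?_
    simp
    ring
  exact ((hu.add hv).div_const 2).add ((hD.sqrt (by positivity)).div_const 2)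

/-- The limit of the derivative when the bases lie in `(0, 1]`; the hypothesis `hL` excludes the
case where all three are less than `1`. -/
lemma tendsto_deriv_mul_log_perronRoot {a b c : ℝ} (ha : 0 < a) (ha1 : a ≤ 1) (hb : 0 < b)
    (hb1 : b ≤ 1) (hc : 0 < c) (hc1 : c ≤ 1)
    (hL : perronRoot (if a = 1 then 1 else 0) (if b = 1 then 1 else 0) (if c = 1 then 1 else 0)
      ≠ 0) :
    Tendsto (deriv fun t : ℝ => t * Real.log (perronRoot (a ^ (1 / t)) (b ^ (1 / t)) (c ^ (1 / t))))
      (𝓝[>] 0) (𝓝 (Real.log (perronRoot (if a = 1 then 1 else 0) (if b = 1 then 1 else 0)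
        (if c = 1 then 1 else 0)))) := by
  set L := perronRoot (if a = 1 then 1 else 0) (if b = 1 then 1 else 0) (if c = 1 then 1 else 0)
  let S : ℝ → ℝ := fun t => perronRoot (a ^ (1 / t)) (b ^ (1 / t)) (c ^ (1 / t))
  let d : ℝ → ℝ → ℝ := fun x t => -(x ^ (1 / t) * Real.log x / t ^ 2)
  let q : ℝ → ℝ := fun t =>
    (2 * (a ^ (1 / t) - b ^ (1 / t)) * (d a t - d b t) + 8 * c ^ (1 / t) * d c t) /
      (2 * Real.sqrt ((a ^ (1 / t) - b ^ (1 / t)) ^ 2 + 4 * (c ^ (1 / t)) ^ 2))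
  have hS : Tendsto S (𝓝[>] 0) (𝓝 L) := by
    have hcont : Continuous fun p : ℝ × ℝ × ℝ => perronRoot p.1 p.2.1 p.2.2 := by
      unfold perronRoot
      fun_prop
    exact (hcont.tendsto _).comp ((tendsto_rpow_one_div ha ha1).prodMk_nhds
      ((tendsto_rpow_one_div hb hb1).prodMk_nhds (tendsto_rpow_one_div hc hc1)))
  have da : Tendsto (fun t => t * d a t) (𝓝[>] 0) (𝓝 0) := tendsto_mul_deriv_rpow_one_div ha ha1
  have db : Tendsto (fun t => t * d b t) (𝓝[>] 0) (𝓝 0) := tendsto_mul_deriv_rpow_one_div hb hb1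
  have dc : Tendsto (fun t => t * d c t) (𝓝[>] 0) (𝓝 0) := tendsto_mul_deriv_rpow_one_div hc hc1
  have hq : Tendsto (fun t => t * q t) (𝓝[>] 0) (𝓝 0) := by
    have hbound : Tendsto (fun t => |t * d a t - t * d b t| + 2 * |t * d c t|) (𝓝[>] 0) (𝓝 0) := by
      simpa using (da.sub db).abs.add (dc.abs.const_mul 2)
    refine squeeze_zero_norm (fun t => ?_) hbound
    have h := abs_radicand_deriv_le (a ^ (1 / t)) (b ^ (1 / t)) (c ^ (1 / t)) (d a t) (d b t) (d c t)
    rw [Real.norm_eq_abs, abs_mul, ← mul_sub, abs_mul, abs_mul]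
    calc |t| * |q t| ≤ |t| * (|d a t - d b t| + 2 * |d c t|) := by gcongr
      _ = _ := by ring
  have hmain : Tendsto (fun t => Real.log (S t) + ((t * d a t + t * d b t) / 2 + t * q t / 2) / S t)
      (𝓝[>] 0) (𝓝 (Real.log L)) := by
    simpa using (hS.log hL).add ((((da.add db).div_const 2).add (hq.div_const 2)).div hS hL)
  refine hmain.congr' ?_
  filter_upwards [self_mem_nhdsWithin] with t ht
  have ht : 0 < t := ht
  have hd := hasDerivAt_perronRoot (hasDerivAt_rpow_one_div ha ht) (hasDerivAt_rpow_one_div hb ht)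
    (hasDerivAt_rpow_one_div hc ht) (Real.rpow_pos_of_pos hc _)
  have hpos : 0 < S t := perronRoot_pos (Real.rpow_pos_of_pos ha _) (Real.rpow_pos_of_pos hb _)
  have hlog := (hasDerivAt_id t).mul (hd.log hpos.ne')
  refine Eq.trans ?_ hlog.deriv.symm
  simp only [S, q, d, id]
  ring

lemma mul_log_perronRoot {m a b c t : ℝ} (hm : 0 < m) (ha : 0 < a) (hb : 0 < b) (hc : 0 < c)
    (ht : 0 < t) :
    t * Real.log (perronRoot (a ^ (1 / t)) (b ^ (1 / t)) (c ^ (1 / t))) =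
      Real.log m + t * Real.log
        (perronRoot ((a / m) ^ (1 / t)) ((b / m) ^ (1 / t)) ((c / m) ^ (1 / t))) := by
  have key : ∀ x : ℝ, 0 < x → x ^ (1 / t) = m ^ (1 / t) * (x / m) ^ (1 / t) := fun x hx => by
    rw [← Real.mul_rpow hm.le (by positivity), mul_div_cancel₀ x hm.ne']
  have hmt : 0 < m ^ (1 / t) := Real.rpow_pos_of_pos hm _
  have hS : 0 < perronRoot ((a / m) ^ (1 / t)) ((b / m) ^ (1 / t)) ((c / m) ^ (1 / t)) :=
    perronRoot_pos (by positivity) (by positivity)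
  rw [key a ha, key b hb, key c hc, perronRoot_mul hmt.le, Real.log_mul hmt.ne' hS.ne',
    Real.log_rpow hm]
  field_simp

lemma perronRoot_indicator (A B C : Prop) [Decidable A] [Decidable B] [Decidable C]
    (h : A ∨ B ∨ C) :
    perronRoot (if A then 1 else 0) (if B then 1 else 0) (if C then 1 else 0) = 1 ∨
    perronRoot (if A then 1 else 0) (if B then 1 else 0) (if C then 1 else 0)
      = (1 + Real.sqrt 5) / 2 ∨
    perronRoot (if A then 1 else 0) (if B then 1 else 0) (if C then 1 else 0) = 2 := by
  have h4 : Real.sqrt 4 = 2 := by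
    rw [show (4 : ℝ) = 2 ^ 2 by norm_num, Real.sqrt_sq (by norm_num)]
  by_cases hA : A <;> by_cases hB : B <;> by_cases hC : C <;> simp [hA, hB, hC] at h <;>
    simp only [perronRoot, hA, hB, hC, if_true, if_false] <;> norm_num [h4] <;>
    exact Or.inr (Or.inl (by ring))

/-- **Guesswork, Lemma 3 (The Golden Ratio and Markovian letters).**
For a two-state Markov chain with transition probabilities `p₁₁, p₂₂ ∈ (0,1)`,
`p₁₂ = 1 - p₁₁`, `p₂₁ = 1 - p₂₂`, let `f(α) = (1+α) log ρ(P_α)` where `ρ(P_α)` is the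
spectral radius of the matrix with entries `p_{i,j}^{1/(1+α)}`, given in closed form.
Then `γ = lim_{α↓-1} f'(α)` exists and lies in `{0, log φ, log 2}`, `φ` the Golden Ratio. -/
theorem guesswork_markov_golden_ratio
    (p11 p22 : ℝ) (h11 : p11 ∈ Set.Ioo (0 : ℝ) 1) (h22 : p22 ∈ Set.Ioo (0 : ℝ) 1) :
    ∃ γ : ℝ,
      Tendsto (deriv (fun α : ℝ =>
          (1 + α) * Real.log
            ((p11 ^ (1 / (1 + α)) + p22 ^ (1 / (1 + α))) / 2 +
              Real.sqrt ((p11 ^ (1 / (1 + α)) - p22 ^ (1 / (1 + α))) ^ 2 +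
                  4 * ((1 - p11) * (1 - p22)) ^ (1 / (1 + α))) / 2)))
        (𝓝[>] (-1 : ℝ)) (𝓝 γ)
      ∧ (γ = 0 ∨ γ = Real.log ((1 + Real.sqrt 5) / 2) ∨ γ = Real.log 2) := by
  obtain ⟨ha, ha1⟩ := h11
  obtain ⟨hb, hb1⟩ := h22
  have hcc : 0 < (1 - p11) * (1 - p22) := mul_pos (by linarith) (by linarith)
  set c := Real.sqrt ((1 - p11) * (1 - p22)) with hcdef
  have hc : 0 < c := Real.sqrt_pos.2 hcc
  set m := max p11 (max p22 c) with hmdef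
  have hma : p11 ≤ m := le_max_left _ _
  have hmb : p22 ≤ m := (le_max_left _ _).trans (le_max_right _ _)
  have hmc : c ≤ m := (le_max_right _ _).trans (le_max_right _ _)
  have hm : 0 < m := ha.trans_le hma
  have hone : p11 / m = 1 ∨ p22 / m = 1 ∨ c / m = 1 := by
    simp only [div_eq_one_iff_eq hm.ne']
    rcases max_choice p11 (max p22 c) with h | h
    · exact Or.inl (by rw [hmdef, h])
    · rcases max_choice p22 c with h' | h'
      · exact Or.inr (Or.inl (by rw [hmdef, h, h']))
      · exact Or.inr (Or.inr (by rw [hmdef, h, h']))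
  have hval := perronRoot_indicator (p11 / m = 1) (p22 / m = 1) (c / m = 1) hone
  have hlim := tendsto_deriv_mul_log_perronRoot (div_pos ha hm) ((div_le_one hm).2 hma)
    (div_pos hb hm) ((div_le_one hm).2 hmb) (div_pos hc hm) ((div_le_one hm).2 hmc)
    (by rcases hval with h | h | h <;> rw [h] <;> positivity)
  refine ⟨Real.log (perronRoot (if p11 / m = 1 then 1 else 0) (if p22 / m = 1 then 1 else 0)
      (if c / m = 1 then 1 else 0)), ?_, ?_⟩
  · have hshift : Tendsto (fun α : ℝ => 1 + α) (𝓝[>] (-1)) (𝓝[>] 0) := by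
      refine tendsto_nhdsWithin_iff.2 ⟨?_, ?_⟩
      · have : Tendsto (fun α : ℝ => 1 + α) (𝓝 (-1)) (𝓝 (1 + -1)) :=
          (continuous_const.add continuous_id).tendsto _
        rw [add_neg_cancel] at this
        exact this.mono_left nhdsWithin_le_nhds
      · filter_upwards [self_mem_nhdsWithin] with α hα
        have : -1 < α := hα
        exact Set.mem_Ioi.2 (by linarith)
    refine (hlim.comp hshift).congr' ?_
    filter_upwards [self_mem_nhdsWithin] with α hα
    rw [Function.comp_apply, ← deriv_comp_const_add, ← deriv_const_add (Real.log m)]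
    refine Filter.EventuallyEq.deriv_eq ?_
    filter_upwards [Ioi_mem_nhds hα] with x hx
    have hx0 : 0 < 1 + x := by
      have : -1 < x := hx
      linarith
    rw [← mul_log_perronRoot hm ha hb hc hx0]
    have hsq : ((1 - p11) * (1 - p22)) ^ (1 / (1 + x)) = (c ^ (1 / (1 + x))) ^ 2 := by
      rw [← Real.sq_sqrt hcc.le, ← hcdef, Real.rpow_pow_comm hc.le]
    rw [hsq, perronRoot]
  · rcases hval with h | h | h <;> rw [h] <;> simp
end

section
/- Fix an integer m ≥ 2 and ε ∈ (0,1), and for each k let p_k be the probability mass function on {1,…,m^k} (identified with words of length k ordered by a guesswork bijection G_k, so G_k(w)=1 for the first word) given by p_k(1) = m^{-k}(1+ε) and p_k(i) = m^{-k}(1 - ε/(m^k - 1)) for 2 ≤ i ≤ m^k. Then: (i) for every α > -1, lim_{k→∞} (1/k) log Σ_{i=1}^{m^k} p_k(i) i^α = α log m, so the scaled cumulant generating function Λ(α) = α log m is linear on (-1,∞) and lim_{α↓-1} Λ'(α) = log m; (ii) lim_{k→∞} (1/k) log max_i p_k(i) = -log m; while (iii) for every k there is exactly one word of maximal probability. Hence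 the inequality lim_{α↓-1} Λ'(α) ≥ limsup_k lim_{α↓-1} d/dα [α R_k((1+α)^{-1})]/k can be strict: here the left side is log m and the right side is 0. -/
/-!
Write `N = m ^ k`. Up to a factor in `[1 - ε, 1 + ε]` every word has probability `1 / N`, so the
`α`-th moment of the guesswork is comparable to `N⁻¹ * ∑ i ≤ N, i ^ α`. For `α > -1` this power sum
lies between constant multiples of `N ^ (α + 1)`: one bound is trivial by monotonicity of
`i ↦ i ^ α`, the other follows from Bernoulli's inequality by induction on `N`
(`powerSum_bounds`). Hence the moment is `N ^ α` up to constants, and constants are invisible on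
the scale `k⁻¹ * log` (`tendsto_rate`). The maximal probability `(1 + ε) / N` is handled by the same
lemma with exponent `-1`, and is attained only by the first word.

With `A > B` the two probabilities and `M = N - 1`, the function `α * R_k((1 + α)⁻¹)` equals
`(1 + α) * log (A ^ t + M * B ^ t) = log A + (1 + α) * log (1 + M * (B / A) ^ t)`, where
`t = 1 / (1 + α)`. Its derivative involves only `(B / A) ^ t` and `t * (B / A) ^ t`, both of which
vanish as `t → ∞`, that is, as `α ↓ -1` (`tendsto_deriv_renyi`).
-/

open Filter Topology

open scoped Classical

/-- The near-uniform distribution on `{1,…,m^k}` from the paper's example: the first word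
has probability `m^{-k}(1+ε)` and every other word has probability
`m^{-k}(1 - ε/(m^k - 1))`. -/
noncomputable def nearUniformPMF (m : ℕ) (ε : ℝ) (k i : ℕ) : ℝ :=
  if i = 1 then (1 + ε) / (m : ℝ) ^ k
  else (1 - ε / ((m : ℝ) ^ k - 1)) / (m : ℝ) ^ k

/-! ### Growth rates and power sums -/

/-- A positive sequence within constant factors of `m ^ (k * α)` has exponential growth rate
`α * log m`. -/
lemma tendsto_rate {m : ℕ} (hm : 2 ≤ m) {c C : ℝ} (hc : 0 < c) (hC : 0 < C) (α : ℝ) (x : ℕ → ℝ)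
    (hx : ∀ k, 1 ≤ k → c * ((m : ℝ) ^ k) ^ α ≤ x k ∧ x k ≤ C * ((m : ℝ) ^ k) ^ α) :
    Tendsto (fun k : ℕ => (k : ℝ)⁻¹ * Real.log (x k)) atTop (𝓝 (α * Real.log m)) := by
  have hm0 : (0 : ℝ) < m := by positivity
  have hlog : ∀ d : ℝ, 0 < d → ∀ k : ℕ, 1 ≤ k →
      (k : ℝ)⁻¹ * Real.log (d * ((m : ℝ) ^ k) ^ α) = (k : ℝ)⁻¹ * Real.log d + α * Real.log m := by
    intro d hd k hk
    have hk0 : (k : ℝ) ≠ 0 := by positivity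
    rw [Real.log_mul hd.ne' (by positivity), Real.log_rpow (by positivity), Real.log_pow]
    field_simp
  have hlim : ∀ d : ℝ, Tendsto (fun k : ℕ => (k : ℝ)⁻¹ * Real.log d + α * Real.log m) atTop
      (𝓝 (α * Real.log m)) := by
    intro d
    simpa using ((tendsto_inv_atTop_nhds_zero_nat (𝕜 := ℝ)).mul_const (Real.log d)).add_const
      (α * Real.log m)
  refine tendsto_of_tendsto_of_tendsto_of_le_of_le' (hlim c) (hlim C) ?_ ?_
  · filter_upwards [eventually_ge_atTop 1] with k hk
    rw [← hlog c hc k hk]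
    have := (hx k hk).1
    gcongr
  · filter_upwards [eventually_ge_atTop 1] with k hk
    rw [← hlog C hC k hk]
    have h0 : 0 < x k := lt_of_lt_of_le (by positivity) (hx k hk).1
    have := (hx k hk).2
    gcongr

/-- The power sums `∑ i ≤ n, i ^ α`, `α > -1`, are comparable to `n ^ (α + 1)`. -/
lemma powerSum_bounds {α : ℝ} (hα : -1 < α) :
    ∃ c C : ℝ, 0 < c ∧ 0 < C ∧ ∀ n : ℕ,
      c * (n : ℝ) ^ (α + 1) ≤ ∑ i ∈ Finset.Icc 1 n, (i : ℝ) ^ α ∧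
        ∑ i ∈ Finset.Icc 1 n, (i : ℝ) ^ α ≤ C * (n : ℝ) ^ (α + 1) := by
  have hs : 0 < α + 1 := by linarith
  -- Bernoulli's inequality is applied to `(n / (n + 1)) ^ (α + 1) = (1 - 1 / (n + 1)) ^ (α + 1)`.
  have hsplit : ∀ n : ℕ, (n : ℝ) ^ (α + 1) =
      ((n : ℝ) + 1) ^ (α + 1) * (1 + -((n : ℝ) + 1)⁻¹) ^ (α + 1) := by
    intro n
    have h : (1 + -((n : ℝ) + 1)⁻¹) = (n : ℝ) / (n + 1) := by field_simp; ring
    rw [h, ← Real.mul_rpow (by positivity) (by positivity)]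
    congr 1
    field_simp
  have hlin : ∀ n : ℕ, ((n : ℝ) + 1) ^ (α + 1) * (1 + (α + 1) * -((n : ℝ) + 1)⁻¹) =
      ((n : ℝ) + 1) ^ (α + 1) - (α + 1) * ((n : ℝ) + 1) ^ α := by
    intro n
    rw [Real.rpow_add_one (by positivity)]
    field_simp
    ring
  have hinv : ∀ n : ℕ, (-1 : ℝ) ≤ -((n : ℝ) + 1)⁻¹ := by
    intro n
    exact neg_le_neg (inv_le_one_of_one_le₀ (by linarith [n.cast_nonneg (α := ℝ)]))
  have hconst : ∀ n : ℕ, ∑ _i ∈ Finset.Icc 1 n, (n : ℝ) ^ α = 1 * (n : ℝ) ^ (α + 1) := by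
    intro n
    rcases Nat.eq_zero_or_pos n with rfl | hn
    · simp [Real.zero_rpow hs.ne']
    · rw [Real.rpow_add_one (by positivity)]
      simp [mul_comm]
  rcases le_total α 0 with h | h
  · refine ⟨1, (α + 1)⁻¹, one_pos, by positivity, fun n => ⟨?_, ?_⟩⟩
    · rw [← hconst]
      refine Finset.sum_le_sum fun i hi => ?_
      obtain ⟨h1, h2⟩ := Finset.mem_Icc.mp hi
      exact Real.rpow_le_rpow_of_nonpos (by positivity) (by exact_mod_cast h2) h
    · induction n with
      | zero => simp [Real.zero_rpow hs.ne']
      | succ n ih =>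
        rw [Finset.sum_Icc_succ_top (by omega)]
        have hb := mul_le_mul_of_nonneg_left (rpow_one_add_le_one_add_mul_self (hinv n) hs.le
          (by linarith : α + 1 ≤ 1)) (by positivity : (0 : ℝ) ≤ ((n : ℝ) + 1) ^ (α + 1))
        rw [← hsplit, hlin] at hb
        push_cast
        rw [inv_mul_eq_div, le_div_iff₀ hs] at ih ⊢
        linarith
  · refine ⟨(α + 1)⁻¹, 1, by positivity, one_pos, fun n => ⟨?_, ?_⟩⟩
    · induction n with
      | zero => simp [Real.zero_rpow hs.ne']
      | succ n ih =>
        rw [Finset.sum_Icc_succ_top (by omega)]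
        have hb := mul_le_mul_of_nonneg_left (one_add_mul_self_le_rpow_one_add (hinv n)
          (by linarith : 1 ≤ α + 1)) (by positivity : (0 : ℝ) ≤ ((n : ℝ) + 1) ^ (α + 1))
        rw [← hsplit, hlin] at hb
        push_cast
        rw [inv_mul_eq_div, div_le_iff₀ hs] at ih ⊢
        linarith
    · rw [← hconst]
      refine Finset.sum_le_sum fun i hi => ?_
      obtain ⟨h1, h2⟩ := Finset.mem_Icc.mp hi
      exact Real.rpow_le_rpow (by positivity) (by exact_mod_cast h2) h

/-! ### The Rényi entropy near `α = -1` -/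

/-- Think of a distribution with one atom of mass `A` and `M` atoms of mass `B < A`: the function
differentiated is `α * R((1 + α)⁻¹)`, and the limit `0` is the logarithm of the number of atoms of
maximal mass. The masses need not sum to `1`, and `M` may be any positive real. -/
lemma tendsto_deriv_renyi {A B M : ℝ} (hB : 0 < B) (hAB : B < A) (hM : 0 < M) :
    Tendsto (deriv (fun α : ℝ =>
      (1 + α) * Real.log (A ^ (1 / (1 + α)) + M * B ^ (1 / (1 + α))))) (𝓝[>] (-1 : ℝ)) (𝓝 0) := by
  have hA : 0 < A := hB.trans hAB
  set l : ℝ := Real.log A - Real.log B with hl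
  have hl0 : 0 < l := sub_pos.mpr (Real.log_lt_log hB hAB)
  -- `(B / A) ^ t` is written `exp (-l * t)`.
  have hfac : ∀ α : ℝ, -1 < α →
      (1 + α) * Real.log (A ^ (1 / (1 + α)) + M * B ^ (1 / (1 + α))) =
        Real.log A + (1 + α) * Real.log (1 + M * Real.exp (-l * (1 + α)⁻¹)) := by
    intro α hα
    have h1 : 0 < 1 + α := by linarith
    have hB' : B ^ (1 / (1 + α)) = A ^ (1 / (1 + α)) * Real.exp (-l * (1 + α)⁻¹) := by
      rw [Real.rpow_def_of_pos hB, Real.rpow_def_of_pos hA, ← Real.exp_add]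
      congr 1
      rw [hl]
      ring
    have h2 : A ^ (1 / (1 + α)) + M * B ^ (1 / (1 + α)) =
        A ^ (1 / (1 + α)) * (1 + M * Real.exp (-l * (1 + α)⁻¹)) := by
      rw [hB']; ring
    rw [h2, Real.log_mul (by positivity) (by positivity), Real.log_rpow hA]
    field_simp
  have hderiv : ∀ α : ℝ, -1 < α →
      deriv (fun α : ℝ => (1 + α) * Real.log (A ^ (1 / (1 + α)) + M * B ^ (1 / (1 + α)))) α =
        Real.log (1 + M * Real.exp (-l * (1 + α)⁻¹)) +
          M * l * ((1 + α)⁻¹ * Real.exp (-l * (1 + α)⁻¹)) /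
            (1 + M * Real.exp (-l * (1 + α)⁻¹)) := by
    intro α hα
    have h1 : 1 + α ≠ 0 := by linarith
    have hpos : 1 + M * Real.exp (-l * (1 + α)⁻¹) ≠ 0 := by positivity
    have heq : (fun α : ℝ => (1 + α) * Real.log (A ^ (1 / (1 + α)) + M * B ^ (1 / (1 + α))))
        =ᶠ[𝓝 α] fun α => Real.log A + (1 + α) * Real.log (1 + M * Real.exp (-l * (1 + α)⁻¹)) := by
      filter_upwards [lt_mem_nhds hα] with β hβ using hfac β hβ
    rw [heq.deriv_eq]
    have hd : HasDerivAt (fun α : ℝ => 1 + α) 1 α := (hasDerivAt_id α).const_add 1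
    have h := (hd.mul (((((hd.inv h1).const_mul (-l)).exp.const_mul M).const_add 1).log
      hpos)).const_add (Real.log A)
    refine h.deriv.trans ?_
    simp only [Pi.inv_apply]
    field_simp
  have ht : Tendsto (fun α : ℝ => (1 + α)⁻¹) (𝓝[>] (-1 : ℝ)) atTop := by
    refine tendsto_inv_nhdsGT_zero.comp ?_
    refine tendsto_nhdsWithin_iff.mpr ⟨?_, ?_⟩
    · have : Tendsto (fun α : ℝ => 1 + α) (𝓝 (-1 : ℝ)) (𝓝 (1 + -1)) :=
        (continuous_const.add continuous_id).tendsto _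
      rw [add_neg_cancel] at this
      exact this.mono_left nhdsWithin_le_nhds
    · filter_upwards [self_mem_nhdsWithin] with α hα
      have : -1 < α := hα
      exact Set.mem_Ioi.mpr (by linarith)
  have e0 : Tendsto (fun t : ℝ => Real.exp (-l * t)) atTop (𝓝 0) := by
    simpa using tendsto_rpow_mul_exp_neg_mul_atTop_nhds_zero 0 l hl0
  have e1 : Tendsto (fun t : ℝ => t * Real.exp (-l * t)) atTop (𝓝 0) := by
    simpa using tendsto_rpow_mul_exp_neg_mul_atTop_nhds_zero 1 l hl0
  have hden : Tendsto (fun t : ℝ => 1 + M * Real.exp (-l * t)) atTop (𝓝 1) := by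
    simpa using (e0.const_mul M).const_add 1
  have hlim : Tendsto (fun t : ℝ => Real.log (1 + M * Real.exp (-l * t)) +
      M * l * (t * Real.exp (-l * t)) / (1 + M * Real.exp (-l * t))) atTop (𝓝 0) := by
    simpa using (hden.log one_ne_zero).add ((e1.const_mul (M * l)).div hden one_ne_zero)
  refine (hlim.comp ht).congr' ?_
  filter_upwards [self_mem_nhdsWithin] with α hα
  exact (hderiv α hα).symm

/-! ### The near-uniform distribution -/

lemma two_le_pow_cast {m : ℕ} (hm : 2 ≤ m) {k : ℕ} (hk : 1 ≤ k) : (2 : ℝ) ≤ (m : ℝ) ^ k := by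
  exact_mod_cast hm.trans (Nat.le_self_pow (by omega) m)

lemma nearUniformPMF_bounds {m : ℕ} (hm : 2 ≤ m) {ε : ℝ} (hε : ε ∈ Set.Ioo (0 : ℝ) 1)
    {k : ℕ} (hk : 1 ≤ k) (i : ℕ) :
    (1 - ε) / (m : ℝ) ^ k ≤ nearUniformPMF m ε k i ∧
      nearUniformPMF m ε k i ≤ (1 + ε) / (m : ℝ) ^ k := by
  obtain ⟨h0, h1⟩ := hε
  have hN := two_le_pow_cast hm hk
  have hq : ε / ((m : ℝ) ^ k - 1) ≤ ε := div_le_self h0.le (by linarith)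
  have hq0 : 0 ≤ ε / ((m : ℝ) ^ k - 1) := div_nonneg h0.le (by linarith)
  unfold nearUniformPMF
  split_ifs <;> constructor <;> gcongr <;> linarith

lemma nearUniformPMF_lt {m : ℕ} (hm : 2 ≤ m) {ε : ℝ} (hε : ε ∈ Set.Ioo (0 : ℝ) 1)
    {k : ℕ} (hk : 1 ≤ k) {i : ℕ} (hi : i ≠ 1) :
    nearUniformPMF m ε k i < (1 + ε) / (m : ℝ) ^ k := by
  have hN := two_le_pow_cast hm hk
  have hq0 : 0 ≤ ε / ((m : ℝ) ^ k - 1) := div_nonneg hε.1.le (by linarith)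
  have := hε.1
  rw [nearUniformPMF, if_neg hi]
  gcongr
  linarith

lemma sup_nearUniformPMF {m : ℕ} (hm : 2 ≤ m) {ε : ℝ} (hε : ε ∈ Set.Ioo (0 : ℝ) 1)
    {k : ℕ} (hk : 1 ≤ k) (hne : (Finset.Icc 1 (m ^ k)).Nonempty) :
    (Finset.Icc 1 (m ^ k)).sup' hne (nearUniformPMF m ε k) = (1 + ε) / (m : ℝ) ^ k := by
  refine le_antisymm (Finset.sup'_le _ _ fun i _ => (nearUniformPMF_bounds hm hε hk i).2) ?_
  have h : nearUniformPMF m ε k 1 = (1 + ε) / (m : ℝ) ^ k := if_pos rfl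
  rw [← h]
  exact Finset.le_sup' _ (Finset.mem_Icc.mpr ⟨le_rfl, Nat.one_le_pow k m (by omega)⟩)

/-- **Guesswork: the bound `(5)` can be strict.**
For the near-uniform example: (i) the sCGF is `Λ(α) = α log m` for all `α > -1`, which is
linear, so `lim_{α↓-1} Λ'(α) = log m`; (ii) the rate of the maximal probability is
`-log m`; (iii) for each `k ≥ 1` there is exactly one most likely word; and (iv) for each
fixed `k ≥ 1` the limit as `α ↓ -1` of the derivative of `α R_k((1+α)⁻¹)` is
`log 1 = 0`. Hence the left side of `(5)` is `log m` while the right side is `0`. -/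
theorem guesswork_strict_inequality_example
    (m : ℕ) (hm : 2 ≤ m) (ε : ℝ) (hε : ε ∈ Set.Ioo (0 : ℝ) 1) :
    (∀ α : ℝ, -1 < α →
      Tendsto (fun k : ℕ => (k : ℝ)⁻¹ *
          Real.log (∑ i ∈ Finset.Icc 1 (m ^ k), nearUniformPMF m ε k i * (i : ℝ) ^ α))
        atTop (𝓝 (α * Real.log m)))
    ∧ Tendsto (deriv (fun α : ℝ => α * Real.log m)) (𝓝[>] (-1 : ℝ)) (𝓝 (Real.log m))
    ∧ Tendsto (fun k : ℕ => (k : ℝ)⁻¹ *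
        Real.log ((Finset.Icc 1 (m ^ k)).sup'
          (Finset.nonempty_Icc.mpr (Nat.one_le_pow k m (by omega)))
          (nearUniformPMF m ε k)))
        atTop (𝓝 (-Real.log m))
    ∧ (∀ k : ℕ, 1 ≤ k →
        ((Finset.Icc 1 (m ^ k)).filter
          (fun i => nearUniformPMF m ε k i =
            (Finset.Icc 1 (m ^ k)).sup'
              (Finset.nonempty_Icc.mpr (Nat.one_le_pow k m (by omega)))
              (nearUniformPMF m ε k))).card = 1)
    ∧ (∀ k : ℕ, 1 ≤ k →
        Tendsto (deriv (fun α : ℝ =>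
            (1 + α) * Real.log (∑ i ∈ Finset.Icc 1 (m ^ k),
              nearUniformPMF m ε k i ^ (1 / (1 + α)))))
          (𝓝[>] (-1 : ℝ)) (𝓝 0)) := by
  have hε0 := hε.1
  have hε1 : 0 < 1 - ε := sub_pos.mpr hε.2
  refine ⟨fun α hα => ?_, ?_, ?_, fun k hk => ?_, fun k hk => ?_⟩
  · obtain ⟨c, C, hc, hC, hb⟩ := powerSum_bounds hα
    refine tendsto_rate hm (mul_pos hε1 hc) (mul_pos (by linarith : 0 < 1 + ε) hC) α _
      fun k hk => ?_
    have hN : (0 : ℝ) < (m : ℝ) ^ k := by linarith [two_le_pow_cast hm hk]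
    obtain ⟨h1, h2⟩ := hb (m ^ k)
    push_cast at h1 h2
    rw [Real.rpow_add_one hN.ne'] at h1 h2
    constructor
    · calc (1 - ε) * c * ((m : ℝ) ^ k) ^ α
          = (1 - ε) / (m : ℝ) ^ k * (c * (((m : ℝ) ^ k) ^ α * (m : ℝ) ^ k)) := by field_simp
        _ ≤ (1 - ε) / (m : ℝ) ^ k * ∑ i ∈ Finset.Icc 1 (m ^ k), (i : ℝ) ^ α := by gcongr
        _ ≤ _ := by
          rw [Finset.mul_sum]
          gcongr with i
          exact (nearUniformPMF_bounds hm hε hk i).1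
    · calc ∑ i ∈ Finset.Icc 1 (m ^ k), nearUniformPMF m ε k i * (i : ℝ) ^ α
          ≤ (1 + ε) / (m : ℝ) ^ k * ∑ i ∈ Finset.Icc 1 (m ^ k), (i : ℝ) ^ α := by
            rw [Finset.mul_sum]
            gcongr with i
            exact (nearUniformPMF_bounds hm hε hk i).2
        _ ≤ (1 + ε) / (m : ℝ) ^ k * (C * (((m : ℝ) ^ k) ^ α * (m : ℝ) ^ k)) := by gcongr
        _ = (1 + ε) * C * ((m : ℝ) ^ k) ^ α := by field_simp
  · have h : deriv (fun α : ℝ => α * Real.log m) = fun _ => Real.log m := by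
      funext α
      simp
    rw [h]
    exact tendsto_const_nhds
  · have h := tendsto_rate hm (by linarith : 0 < 1 + ε) (by linarith : 0 < 1 + ε) (-1)
      (fun k => (Finset.Icc 1 (m ^ k)).sup'
        (Finset.nonempty_Icc.mpr (Nat.one_le_pow k m (by omega))) (nearUniformPMF m ε k))
      (fun k hk => by
        simp only [sup_nearUniformPMF hm hε hk, Real.rpow_neg_one, div_eq_mul_inv, le_refl,
          and_self])
    simpa using h
  · rw [sup_nearUniformPMF hm hε hk, Finset.card_eq_one]
    refine ⟨1, Finset.ext fun i => ?_⟩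
    rw [Finset.mem_filter, Finset.mem_singleton]
    constructor
    · rintro ⟨_, h⟩
      by_contra hi
      exact (nearUniformPMF_lt hm hε hk hi).ne h
    · rintro rfl
      exact ⟨Finset.mem_Icc.mpr ⟨le_rfl, Nat.one_le_pow k m (by omega)⟩, if_pos rfl⟩
  · have hN := two_le_pow_cast hm hk
    have hB : 0 < nearUniformPMF m ε k 2 :=
      lt_of_lt_of_le (by positivity) (nearUniformPMF_bounds hm hε hk 2).1
    have hM : (0 : ℝ) < (m : ℝ) ^ k - 1 := by linarith
    have hsum : ∀ t : ℝ, ∑ i ∈ Finset.Icc 1 (m ^ k), nearUniformPMF m ε k i ^ t =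
        ((1 + ε) / (m : ℝ) ^ k) ^ t + ((m : ℝ) ^ k - 1) * nearUniformPMF m ε k 2 ^ t := by
      intro t
      have h1 : 1 ≤ m ^ k := Nat.one_le_pow k m (by omega)
      have hrest : ∀ i ∈ Finset.Ioc 1 (m ^ k),
          nearUniformPMF m ε k i ^ t = nearUniformPMF m ε k 2 ^ t := by
        intro i hi
        have : i ≠ 1 := (Finset.mem_Ioc.mp hi).1.ne'
        simp [nearUniformPMF, this]
      have hfirst : nearUniformPMF m ε k 1 = (1 + ε) / (m : ℝ) ^ k := if_pos rfl
      rw [← Finset.add_sum_Ioc_eq_sum_Icc h1, Finset.sum_congr rfl hrest, hfirst]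
      simp [Nat.cast_sub h1]
    simp only [hsum]
    exact tendsto_deriv_renyi hB (nearUniformPMF_lt hm hε hk (by norm_num)) hM
end

section
/- Let p₁₁, p₂₂ ∈ (0,1), p₁₂ = 1 - p₁₁, p₂₁ = 1 - p₂₂, and let μ be an initial distribution on {1,2} with μ(1) > 0 and μ(2) > 0. For a word w = (w_1,…,w_k) ∈ {1,2}^k let P(W_k = w) = μ(w_1) Π_{i=1}^{k-1} p_{w_i, w_{i+1}}. Then the exponential rate of the maximal word probability satisfies lim_{k→∞} (1/k) log max_{w∈{1,2}^k} P(W_k = w) = log max(p₁₁, p₂₂, √(p₁₂ p₂₁)). -/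
/-!
With `ρ = max p₁₁ p₂₂ √(p₁₂ p₂₁)`, the maximal word probability is comparable to `ρ ^ k` up to
positive constants independent of `k`, so its exponential rate is `log ρ`.

Both bounds come from the single weight `h = (p₁₂, ρ)`. Every transition satisfies
`P i j ≤ ρ * (h i / h j)`: on the diagonal this is `pᵢᵢ ≤ ρ`, and the only nontrivial off-diagonal
case is `p₁₂ p₂₁ ≤ ρ ^ 2`. The factors `h i / h j` telescope along a word, which gives the upper
bound. Whichever of the three terms attains the maximum, some infinite word (one of the two constant
words, or the alternating one) has equality at every transition, which gives the lower bound.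
The general statement for a finite alphabet with such a weight is `tendsto_rate_of_gauge`.
-/

open Filter Topology

lemma prod_div_telescope {α : Type*} (h : α → ℝ) (hpos : ∀ i, 0 < h i) :
    ∀ (k : ℕ) (w : Fin (k + 1) → α),
      ∏ i : Fin k, h (w i.castSucc) / h (w i.succ) = h (w 0) / h (w (Fin.last k))
  | 0, w => by simp [(hpos (w 0)).ne']
  | k + 1, w => by
    rw [Fin.prod_univ_castSucc]
    have := prod_div_telescope h hpos k (fun i => w i.castSucc)
    simp only [Fin.succ_castSucc, Fin.castSucc_zero] at this ⊢
    rw [this, Fin.succ_last]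
    exact div_mul_div_cancel₀ (hpos _).ne'

/-- If the maximum `M k` is squeezed between `c * ρ ^ k` and `C * ρ ^ k`, its rate is `log ρ`. -/
lemma tendsto_rate_of_bounds (M : ℕ → ℝ) (ρ c C : ℝ) (hρ : 0 < ρ) (hc : 0 < c)
    (hlow : ∀ k, c * ρ ^ k ≤ M k) (hup : ∀ k, M k ≤ C * ρ ^ k) :
    Tendsto (fun k : ℕ => ((k : ℝ) + 1)⁻¹ * Real.log (M k)) atTop (𝓝 (Real.log ρ)) := by
  have hM : ∀ k, 0 < M k := fun k => (mul_pos hc (pow_pos hρ k)).trans_le (hlow k)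
  have hC : 0 < C := by simpa using (hM 0).trans_le (hup 0)
  have hlim : ∀ A : ℝ, 0 < A → Tendsto (fun k : ℕ => ((k : ℝ) + 1)⁻¹ * Real.log (A * ρ ^ k))
      atTop (𝓝 (Real.log ρ)) := by
    intro A hA
    have h0 := (tendsto_one_div_add_atTop_nhds_zero_nat (𝕜 := ℝ)).mul_const
      (Real.log A - Real.log ρ)
    have h1 := h0.const_add (Real.log ρ)
    rw [zero_mul, add_zero] at h1
    refine h1.congr fun k => ?_
    rw [Real.log_mul hA.ne' (pow_pos hρ k).ne', Real.log_pow]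
    have : (k : ℝ) + 1 ≠ 0 := by positivity
    field_simp
    ring
  refine tendsto_of_tendsto_of_tendsto_of_le_of_le (hlim c hc) (hlim C hC) (fun k => ?_)
    (fun k => ?_)
  · have := Real.log_le_log (mul_pos hc (pow_pos hρ k)) (hlow k)
    dsimp only
    gcongr
  · have := Real.log_le_log (hM k) (hup k)
    dsimp only
    gcongr

/-- A positive weight `h` with `P i j ≤ ρ * (h i / h j)` everywhere, and with equality along the
transitions of one infinite word `f`, identifies `log ρ` as the rate of the largest word weight. -/
lemma tendsto_rate_of_gauge {α : Type*} [Finite α] [Nonempty α] (P : α → α → ℝ) (μ h : α → ℝ)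
    (ρ : ℝ) (hρ : 0 < ρ) (hP : ∀ i j, 0 ≤ P i j) (hμ : ∀ i, 0 < μ i) (hh : ∀ i, 0 < h i)
    (hle : ∀ i j, P i j ≤ ρ * (h i / h j)) (f : ℕ → α)
    (hf : ∀ n, P (f n) (f (n + 1)) = ρ * (h (f n) / h (f (n + 1)))) :
    Tendsto (fun k : ℕ => ((k : ℝ) + 1)⁻¹ *
        Real.log (⨆ w : Fin (k + 1) → α, μ (w 0) * ∏ i : Fin k, P (w i.castSucc) (w i.succ)))
      atTop (𝓝 (Real.log ρ)) := by
  obtain ⟨a, ha⟩ := Finite.exists_min (fun x : α × α => μ x.1 * (h x.1 / h x.2))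
  obtain ⟨b, hb⟩ := Finite.exists_max (fun x : α × α => μ x.1 * (h x.1 / h x.2))
  have hprod : ∀ (k : ℕ) (w : Fin (k + 1) → α),
      ∏ i : Fin k, ρ * (h (w i.castSucc) / h (w i.succ)) =
        ρ ^ k * (h (w 0) / h (w (Fin.last k))) := by
    intro k w
    rw [Finset.prod_mul_distrib, prod_div_telescope h hh]
    simp
  refine tendsto_rate_of_bounds _ ρ (μ a.1 * (h a.1 / h a.2)) (μ b.1 * (h b.1 / h b.2)) hρ
    (mul_pos (hμ _) (div_pos (hh _) (hh _))) (fun k => ?_) (fun k => ?_)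
  · refine le_trans ?_ (le_ciSup (Set.finite_range _).bddAbove
      (fun i : Fin (k + 1) => f i))
    have h1 : ∏ i : Fin k, P (f (i.castSucc : Fin (k + 1))) (f (i.succ : Fin (k + 1))) =
        ρ ^ k * (h (f 0) / h (f k)) := by
      rw [Finset.prod_congr rfl fun i _ => by simpa using hf i]
      simpa using hprod k (fun i => f i)
    rw [h1]
    have := mul_le_mul_of_nonneg_right (ha (f 0, f k)) (pow_pos hρ k).le
    simp only [Fin.val_zero] at this ⊢
    linarith
  · refine ciSup_le fun w => ?_
    have h1 : ∏ i : Fin k, P (w i.castSucc) (w i.succ) ≤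
        ρ ^ k * (h (w 0) / h (w (Fin.last k))) := by
      rw [← hprod]
      exact Finset.prod_le_prod (fun i _ => hP _ _) (fun i _ => hle _ _)
    have h2 := mul_le_mul_of_nonneg_left h1 (hμ (w 0)).le
    have h3 := mul_le_mul_of_nonneg_right (hb (w 0, w (Fin.last k))) (pow_pos hρ k).le
    dsimp only at h3
    linarith

/-- **Guesswork: rate of the maximal word probability for Markovian letters.**
For words of length `k+1` generated by a two-state Markov chain with transition matrix
`((p₁₁, 1-p₁₁), (1-p₂₂, p₂₂))`, all entries positive, and initial distribution `μ`
charging both states, the exponential rate of the maximal word probability is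
`log max(p₁₁, p₂₂, √(p₁₂ p₂₁))`. -/
theorem guesswork_markov_p1_rate
    (p11 p22 : ℝ) (h11 : p11 ∈ Set.Ioo (0 : ℝ) 1) (h22 : p22 ∈ Set.Ioo (0 : ℝ) 1)
    (μ : Fin 2 → ℝ) (hμ_pos : ∀ i, 0 < μ i) (hμ_sum : ∑ i, μ i = 1) :
    Tendsto (fun k : ℕ => ((k : ℝ) + 1)⁻¹ *
        Real.log (⨆ w : Fin (k + 1) → Fin 2,
          μ (w 0) * ∏ i : Fin k, ![![p11, 1 - p11], ![1 - p22, p22]]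
            (w i.castSucc) (w i.succ)))
      atTop
      (𝓝 (Real.log (max p11 (max p22 (Real.sqrt ((1 - p11) * (1 - p22))))))) := by
  obtain ⟨ha, ha'⟩ := h11
  obtain ⟨hb, hb'⟩ := h22
  have hq : 0 < 1 - p11 := by linarith
  have hr : 0 < 1 - p22 := by linarith
  set s := Real.sqrt ((1 - p11) * (1 - p22)) with hs
  have hs2 : s ^ 2 = (1 - p11) * (1 - p22) := Real.sq_sqrt (by positivity)
  have hs0 : 0 ≤ s := Real.sqrt_nonneg _
  set ρ := max p11 (max p22 s) with hρdef
  have h1 : p11 ≤ ρ := le_max_left _ _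
  have h2 : p22 ≤ ρ := (le_max_left _ _).trans (le_max_right _ _)
  have h3 : s ≤ ρ := (le_max_right _ _).trans (le_max_right _ _)
  have hρ : 0 < ρ := ha.trans_le h1
  have hcase : ρ = p11 ∨ ρ = p22 ∨ ρ = s := by
    rcases max_choice p11 (max p22 s) with h | h
    · exact Or.inl h
    · rcases max_choice p22 s with h' | h'
      · exact Or.inr (Or.inl (h.trans h'))
      · exact Or.inr (Or.inr (h.trans h'))
  clear_value ρ s
  have hh : ∀ i : Fin 2, 0 < (![1 - p11, ρ] : Fin 2 → ℝ) i := by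
    intro i
    fin_cases i <;> simpa
  obtain ⟨f, hf⟩ : ∃ f : ℕ → Fin 2, ∀ n,
      (![![p11, 1 - p11], ![1 - p22, p22]] : Fin 2 → Fin 2 → ℝ) (f n) (f (n + 1)) =
        ρ * ((![1 - p11, ρ] : Fin 2 → ℝ) (f n) / (![1 - p11, ρ] : Fin 2 → ℝ) (f (n + 1))) := by
    rcases hcase with h | h | h
    -- If a diagonal entry attains the maximum, a constant word has equality throughout.
    · exact ⟨fun _ => 0, fun n => by simp [hq.ne', h]⟩
    · exact ⟨fun _ => 1, fun n => by simp [h, hb.ne']⟩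
    -- If `ρ = √(p₁₂ p₂₁)`, both off-diagonal inequalities are equalities: alternate.
    · refine ⟨fun n => if Even n then 0 else 1, fun n => ?_⟩
      by_cases hn : Even n
      · simp [hn, Nat.even_add_one]
        field_simp
      · simp [hn, Nat.even_add_one]
        field_simp
        rw [h, hs2, mul_comm]
  refine tendsto_rate_of_gauge _ μ ![1 - p11, ρ] ρ hρ ?_ hμ_pos hh ?_ f hf
  · intro i j
    fin_cases i <;> fin_cases j <;> simp <;> linarith
  · intro i j
    fin_cases i <;> fin_cases j
    · simpa [hq.ne'] using h1
    · change 1 - p11 ≤ ρ * ((1 - p11) / ρ)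
      rw [mul_div_cancel₀ _ hρ.ne']
    · change 1 - p22 ≤ ρ * (ρ / (1 - p11))
      rw [← mul_div_assoc, le_div_iff₀ hq]
      nlinarith
    · simpa [hρ.ne'] using h2
end

section
/- Under Assumptions 1 and 2, extend Λ by Λ(α) := p₁ for α ≤ -1 and set Λ*(x) := sup_{α∈ℝ} (xα - Λ(α)). Then Λ*(x) ≥ 0 for all x ∈ ℝ, and Λ*(x) = 0 if and only if x = Λ'(0); moreover Λ'(0) = lim_{k→∞} (1/k) H(W_k), where H(W_k) = -Σ_{w∈A^k} p_k(w) log p_k(w). -/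
/-!
Write `h k = k⁻¹ H(W_k)` and let `R k α = k⁻¹ (1 + α) log ∑ p_k(w) ^ (1 / (1 + α))`, which tends to
`Λ α`. Jensen's inequality for `exp` gives `α * h k ≤ R k α` for every `α > -1`
(`entropy_le_renyi`). Since `Λ 0 = 0`, dividing by `α > 0` and by `α < 0` squeezes `h k` between
difference quotients of `Λ` at `0`, hence `h k → Λ' 0`. Passing to the limit in the same inequality
yields the tangent line bound `α * Λ' 0 ≤ Λ α` on `(-1, ∞)`, without a separate convexity argument.
For `α ≤ -1`, the bound `-log max p ≤ H` (`sum_mul_log_le_log_iSup`) gives `-p₁ ≤ Λ' 0`, and with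
`p₁ ≤ 0` this yields `α * Λ' 0 ≤ -Λ' 0 ≤ p₁`. Conversely, if `x * α ≤ Λ α` near `0`, then
`Λ α - x * α` has a local minimum at `0`, so `x = Λ' 0`.
-/

open Filter Topology

open scoped Classical ENNReal

/-- Shannon entropy is bounded by Rényi entropy, in the scaling `s = 1 / (1 + α)`. For `α < 0` the
sign of `α` turns this into a lower bound on the Shannon entropy. -/
theorem entropy_le_renyi {ι : Type*} [Fintype ι] (q : ι → ℝ) (hq : ∀ i, 0 ≤ q i)
    (hs : ∑ i, q i = 1) (α : ℝ) (hα : -1 < α) :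
    α * (-∑ i, q i * Real.log (q i)) ≤ (1 + α) * Real.log (∑ i, q i ^ (1 / (1 + α))) := by
  have hα' : 0 < 1 + α := by linarith
  have hJ := convexOn_exp.map_sum_le (t := Finset.univ) (w := q)
    (p := fun i => (1 / (1 + α) - 1) * Real.log (q i)) (fun i _ => hq i) hs
    (fun i _ => Set.mem_univ _)
  have hterm : ∀ i, q i * Real.exp ((1 / (1 + α) - 1) * Real.log (q i)) = q i ^ (1 / (1 + α)) := by
    intro i
    rcases (hq i).eq_or_lt with h | h
    · rw [← h, Real.zero_rpow (by positivity), zero_mul]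
    · rw [mul_comm (1 / (1 + α) - 1), ← Real.rpow_def_of_pos h]
      nth_rewrite 1 [← Real.rpow_one (q i)]
      rw [← Real.rpow_add h]
      congr 1
      ring
  simp only [smul_eq_mul, hterm] at hJ
  have hlog := (Real.le_log_iff_exp_le ((Real.exp_pos _).trans_le hJ)).2 hJ
  have hsum : ∑ i, q i * ((1 / (1 + α) - 1) * Real.log (q i))
      = (1 / (1 + α) - 1) * ∑ i, q i * Real.log (q i) := by
    rw [Finset.mul_sum]
    exact Finset.sum_congr rfl fun i _ => by ring
  rw [hsum] at hlog
  calc α * (-∑ i, q i * Real.log (q i))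
      = (1 + α) * ((1 / (1 + α) - 1) * ∑ i, q i * Real.log (q i)) := by
        field_simp
        ring
    _ ≤ _ := mul_le_mul_of_nonneg_left hlog hα'.le

/-- Shannon entropy dominates min-entropy. -/
theorem sum_mul_log_le_log_iSup {ι : Type*} [Fintype ι] (q : ι → ℝ) (hq : ∀ i, 0 ≤ q i)
    (hs : ∑ i, q i = 1) : ∑ i, q i * Real.log (q i) ≤ Real.log (⨆ i, q i) := by
  calc ∑ i, q i * Real.log (q i) ≤ ∑ i, q i * Real.log (⨆ i, q i) := by
        refine Finset.sum_le_sum fun i _ => ?_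
        rcases (hq i).eq_or_lt with h | h
        · simp [← h]
        · exact mul_le_mul_of_nonneg_left
            (Real.log_le_log h (le_ciSup (Set.finite_range q).bddAbove i)) h.le
    _ = _ := by rw [← Finset.sum_mul, hs, one_mul]

/-- **Guesswork: the zero of the rate function.**
Under Assumptions 1 and 2, the rate function `Λ*` is nonnegative, vanishes exactly at
`x = Λ'(0)`, and `Λ'(0)` is the specific Shannon entropy `lim_k k⁻¹ H(W_k)`. -/
theorem guesswork_rate_zero_at_shannon
    (m : ℕ) (hm : 2 ≤ m)
    (p : (k : ℕ) → (Fin k → Fin m) → ℝ)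
    (hp_nonneg : ∀ k w, 0 ≤ p k w)
    (hp_sum : ∀ k, ∑ w, p k w = 1)
    (G : (k : ℕ) → (Fin k → Fin m) → ℕ)
    (hG_bij : ∀ k, Set.BijOn (G k) Set.univ (Set.Icc 1 (m ^ k)))
    (hG_mono : ∀ k (w w' : Fin k → Fin m), G k w < G k w' → p k w' ≤ p k w)
    (Λ Λ' : ℝ → ℝ)
    (h_sCGF : ∀ α : ℝ, -1 < α →
      Tendsto (fun k : ℕ => (k : ℝ)⁻¹ *
          Real.log (∑ w, p k w * (G k w : ℝ) ^ α)) atTop (𝓝 (Λ α)))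
    (h_deriv : ∀ α : ℝ, -1 < α → HasDerivAt Λ (Λ' α) α)
    (h_deriv_cont : ContinuousOn Λ' (Set.Ioi (-1 : ℝ)))
    (h_renyi : ∀ α : ℝ, -1 < α →
      Tendsto (fun k : ℕ => (k : ℝ)⁻¹ * (1 + α) *
          Real.log (∑ w, p k w ^ (1 / (1 + α)))) atTop (𝓝 (Λ α)))
    (p₁ : ℝ) (hp₁_le : p₁ ≤ 0)
    (hp₁ : Tendsto (fun k : ℕ => (k : ℝ)⁻¹ * Real.log (⨆ w, p k w)) atTop (𝓝 p₁)) :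
    (∀ x : ℝ, (0 : EReal) ≤ guessworkRate Λ p₁ x)
    ∧ (∀ x : ℝ, guessworkRate Λ p₁ x = (0 : EReal) ↔ x = Λ' 0)
    ∧ Tendsto (fun k : ℕ => (k : ℝ)⁻¹ * (-∑ w, p k w * Real.log (p k w)))
        atTop (𝓝 (Λ' 0)) := by
  set h : ℕ → ℝ := fun k => (k : ℝ)⁻¹ * (-∑ w, p k w * Real.log (p k w)) with hh
  have hΛ0 : Λ 0 = 0 := by
    refine tendsto_nhds_unique (h_sCGF 0 (by norm_num)) ?_
    simp [hp_sum]
  have hkey : ∀ α : ℝ, -1 < α → ∀ k : ℕ,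
      α * h k ≤ (k : ℝ)⁻¹ * (1 + α) * Real.log (∑ w, p k w ^ (1 / (1 + α))) := by
    intro α hα k
    have := mul_le_mul_of_nonneg_left (entropy_le_renyi (p k) (hp_nonneg k) (hp_sum k) α hα)
      (inv_nonneg.2 (Nat.cast_nonneg (α := ℝ) k))
    simp only [hh]
    linarith
  have hslope := (h_deriv 0 (by norm_num)).tendsto_slope_zero
  simp only [zero_add, hΛ0, sub_zero, smul_eq_mul] at hslope
  have hlim : Tendsto h atTop (𝓝 (Λ' 0)) := by
    refine tendsto_order.2 ⟨fun a ha => ?_, fun a ha => ?_⟩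
    -- A difference quotient at some `α ∈ (-1, 0)` exceeding `a` is eventually a lower bound.
    · have h1 : ∀ᶠ t : ℝ in 𝓝[<] 0, a < t⁻¹ * Λ t :=
        (hslope.mono_left (nhdsWithin_mono _ fun t ht => ne_of_lt ht)).eventually_const_lt ha
      obtain ⟨α, ⟨ha', hα⟩, hα0⟩ := ((h1.and (eventually_nhdsWithin_of_eventually_nhds
        (lt_mem_nhds (show (-1 : ℝ) < 0 by norm_num)))).and self_mem_nhdsWithin).exists
      filter_upwards [((h_renyi α hα).const_mul α⁻¹).eventually_const_lt ha'] with k hk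
      refine hk.trans_le ?_
      have := mul_le_mul_of_nonpos_left (hkey α hα k) (inv_lt_zero.2 hα0).le
      rwa [inv_mul_cancel_left₀ (ne_of_lt hα0)] at this
    · have h1 : ∀ᶠ t : ℝ in 𝓝[>] 0, t⁻¹ * Λ t < a :=
        (hslope.mono_left (nhdsWithin_mono _ fun t ht => ne_of_gt ht)).eventually_lt_const ha
      obtain ⟨α, ha', hα0⟩ := (h1.and self_mem_nhdsWithin).exists
      have hα0 : 0 < α := hα0
      have hα : -1 < α := by linarith
      filter_upwards [((h_renyi α hα).const_mul α⁻¹).eventually_lt_const ha'] with k hk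
      refine lt_of_le_of_lt ?_ hk
      have := mul_le_mul_of_nonneg_left (hkey α hα k) (inv_pos.2 hα0).le
      rwa [inv_mul_cancel_left₀ hα0.ne'] at this
  have htan : ∀ α : ℝ, -1 < α → α * Λ' 0 ≤ Λ α := fun α hα =>
    le_of_tendsto_of_tendsto' (hlim.const_mul α) (h_renyi α hα) (hkey α hα)
  have hmin : -Λ' 0 ≤ p₁ := by
    refine le_of_tendsto_of_tendsto' hlim.neg hp₁ fun k => ?_
    have := mul_le_mul_of_nonneg_left (sum_mul_log_le_log_iSup (p k) (hp_nonneg k) (hp_sum k))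
      (inv_nonneg.2 (Nat.cast_nonneg (α := ℝ) k))
    simp only [hh]
    linarith
  have hnonneg : ∀ x : ℝ, (0 : EReal) ≤ guessworkRate Λ p₁ x := by
    intro x
    refine le_iSup_of_le (0 : ℝ) ?_
    simp [guessworkLambdaExt, hΛ0, show ¬ (0 : ℝ) ≤ -1 by norm_num]
  refine ⟨hnonneg, fun x => ⟨fun hx => ?_, ?_⟩, hlim⟩
  · have hle : ∀ α : ℝ, -1 < α → x * α ≤ Λ α := by
      intro α hα
      have h1 : ((x * α - guessworkLambdaExt Λ p₁ α : ℝ) : EReal) ≤ 0 :=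
        (le_iSup (fun α : ℝ => ((x * α - guessworkLambdaExt Λ p₁ α : ℝ) : EReal)) α).trans hx.le
      have h2 : x * α - guessworkLambdaExt Λ p₁ α ≤ 0 := by exact_mod_cast h1
      simp only [guessworkLambdaExt, not_le.2 hα, if_false] at h2
      linarith
    have hloc : IsLocalMin (fun α => Λ α - x * α) 0 := by
      filter_upwards [lt_mem_nhds (show (-1 : ℝ) < 0 by norm_num)] with α hα
      have := hle α hα
      simp only [hΛ0]
      linarith
    have hd := (h_deriv 0 (by norm_num)).sub ((hasDerivAt_id (0 : ℝ)).const_mul x)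
    have := hloc.hasDerivAt_eq_zero hd
    linarith
  · rintro rfl
    refine le_antisymm (iSup_le fun α => ?_) (hnonneg _)
    have : Λ' 0 * α - guessworkLambdaExt Λ p₁ α ≤ 0 := by
      unfold guessworkLambdaExt
      split_ifs with hα
      · nlinarith
      · have := htan α (not_le.1 hα)
        linarith
    exact_mod_cast this
end

section
/- For each k let p_k be a probability mass function on A^k, and suppose the convex differentiable functions g_k(α) := (1/k)(1+α) log Σ_{w∈A^k} p_k(w)^{1/(1+α)} converge pointwise on a neighborhood of 0 to a function Λ that is differentiable at 0. Then the derivatives converge at 0: lim_{k→∞} g_k'(0) = Λ'(0); since g_k'(0) = (1/k) H(W_k) with H(W_k) = -Σ_{w∈A^k} p_k(w) log p_k(w), the specific Shannon entropy lim_{k→∞} (1/k) H(W_k) exists and equals Λ'(0). -/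
open Filter Topology

/-!
The entropy formula is a direct computation: at `α = 0` the sum `∑ w, p w ^ (1 / (1 + α))` equals
`1`, so its logarithm vanishes there and only the derivative of the sum, `-∑ w, p w * log (p w)`,
contributes (`hasDerivAt_mul_log_sum_rpow`).

The convergence of derivatives is a general fact about convex functions
(`tendsto_deriv_of_convexOn`). By convexity `g_k'(x)` lies between the difference quotients of
`g_k` on the two sides of `x`. For a fixed increment these converge to the difference quotients
of `Λ`, which are as close as desired to `Λ'(x)` once the increment is small.
-/

/-- If convex functions differentiable at `x` converge pointwise near `x` to a function
differentiable at `x`, then their derivatives at `x` converge to the derivative of the limit. -/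
lemma tendsto_deriv_of_convexOn {ι : Type*} {l : Filter ι} {g : ι → ℝ → ℝ} {f : ℝ → ℝ}
    {U : Set ℝ} {x : ℝ} (hU : U ∈ 𝓝 x) (hconv : ∀ k, ConvexOn ℝ U (g k))
    (hdiff : ∀ k, DifferentiableAt ℝ (g k) x)
    (hlim : ∀ᶠ y in 𝓝 x, Tendsto (fun k => g k y) l (𝓝 (f y)))
    (hf : DifferentiableAt ℝ f x) :
    Tendsto (fun k => deriv (g k) x) l (𝓝 (deriv f x)) := by
  have hx : x ∈ U := mem_of_mem_nhds hU
  have hslope : ∀ y, Tendsto (fun k => g k y) l (𝓝 (f y)) →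
      Tendsto (fun k => slope (g k) x y) l (𝓝 (slope f x y)) := by
    intro y hy
    simp only [slope_def_field]
    exact (hy.sub hlim.self_of_nhds).div_const _
  have hf' := hf.hasDerivAt.tendsto_slope
  refine tendsto_order.2 ⟨fun a ha => ?_, fun a ha => ?_⟩
  · have h1 : ∀ᶠ y in 𝓝[<] x, a < slope f x y :=
      (hf'.mono_left (nhdsWithin_mono _ fun y hy => ne_of_lt hy)).eventually_const_lt ha
    obtain ⟨y, hay, hly, hyU, hyx⟩ := (h1.and ((hlim.filter_mono nhdsWithin_le_nhds).and
      ((show ∀ᶠ y in 𝓝[<] x, y ∈ U from mem_nhdsWithin_of_mem_nhds hU).and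
        self_mem_nhdsWithin))).exists
    filter_upwards [(hslope y hly).eventually_const_lt hay] with k hk
    refine hk.trans_le ?_
    rw [slope_comm]
    exact (hconv k).slope_le_deriv hyU hx hyx (hdiff k)
  · have h1 : ∀ᶠ y in 𝓝[>] x, slope f x y < a :=
      (hf'.mono_left (nhdsWithin_mono _ fun y hy => ne_of_gt hy)).eventually_lt_const ha
    obtain ⟨y, hay, hly, hyU, hyx⟩ := (h1.and ((hlim.filter_mono nhdsWithin_le_nhds).and
      ((show ∀ᶠ y in 𝓝[>] x, y ∈ U from mem_nhdsWithin_of_mem_nhds hU).and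
        self_mem_nhdsWithin))).exists
    filter_upwards [(hslope y hly).eventually_lt_const hay] with k hk
    exact ((hconv k).deriv_le_slope hx hyU hyx (hdiff k)).trans_lt hk

lemma hasDerivAt_rpow_one_div_one_add {a : ℝ} (ha : 0 ≤ a) :
    HasDerivAt (fun α : ℝ => a ^ (1 / (1 + α))) (-(a * Real.log a)) 0 := by
  rcases ha.eq_or_lt with rfl | ha
  · -- The exponent is nonzero near `0`, so the function is locally constant, equal to `0`.
    have : (fun α : ℝ => (0 : ℝ) ^ (1 / (1 + α))) =ᶠ[𝓝 0] fun _ => 0 := by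
      filter_upwards [Ioi_mem_nhds (show (-1 : ℝ) < 0 by norm_num)] with α hα
      have : 0 < 1 + α := by linarith [Set.mem_Ioi.1 hα]
      exact Real.zero_rpow (by positivity)
    simpa using (hasDerivAt_const (0 : ℝ) (0 : ℝ)).congr_of_eventuallyEq this
  · have h1 : HasDerivAt (fun α : ℝ => 1 / (1 + α)) (-1) 0 := by
      simpa [one_div] using
        ((hasDerivAt_id (0 : ℝ)).const_add 1).fun_inv (by norm_num)
    convert h1.const_rpow ha using 1
    simp [mul_comm]

lemma hasDerivAt_mul_log_sum_rpow {ι : Type*} [Fintype ι] (p : ι → ℝ) (hp : ∀ w, 0 ≤ p w)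
    (hsum : ∑ w, p w = 1) (c : ℝ) :
    HasDerivAt (fun α : ℝ => c * (1 + α) * Real.log (∑ w, p w ^ (1 / (1 + α))))
      (c * (-∑ w, p w * Real.log (p w))) 0 := by
  have hS : HasDerivAt (fun α : ℝ => ∑ w, p w ^ (1 / (1 + α)))
      (∑ w, -(p w * Real.log (p w))) 0 :=
    HasDerivAt.fun_sum fun w _ => hasDerivAt_rpow_one_div_one_add (hp w)
  have hS0 : ∑ w, p w ^ (1 / (1 + (0 : ℝ))) = 1 := by simpa using hsum
  have hlog := hS.log (by rw [hS0]; exact one_ne_zero)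
  have hlin : HasDerivAt (fun α : ℝ => c * (1 + α)) (c * 1) 0 :=
    ((hasDerivAt_id (0 : ℝ)).const_add 1).const_mul c
  refine (hlin.fun_mul hlog).congr_deriv ?_
  simp [hsum]

/-- **Convergence of entropies via convexity.**
If the convex differentiable functions `g_k(α) = k⁻¹(1+α) log Σ_w p_k(w)^{1/(1+α)}`
converge pointwise on a neighborhood of `0` to a function `Λ` differentiable at `0`,
then `g_k'(0) → Λ'(0)`; since `g_k'(0) = k⁻¹ H(W_k)`, the specific Shannon entropy
exists and equals `Λ'(0)`. -/
theorem specific_shannon_entropy_exists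
    (m : ℕ) (hm : 2 ≤ m)
    (p : (k : ℕ) → (Fin k → Fin m) → ℝ)
    (hp_nonneg : ∀ k w, 0 ≤ p k w)
    (hp_sum : ∀ k, ∑ w, p k w = 1)
    (g : ℕ → ℝ → ℝ)
    (hg : ∀ k (α : ℝ), g k α =
      (k : ℝ)⁻¹ * (1 + α) * Real.log (∑ w, p k w ^ (1 / (1 + α))))
    (hg_convex : ∀ k, ConvexOn ℝ (Set.Ioi (-1 : ℝ)) (g k))
    (hg_diff : ∀ k, ∀ α ∈ Set.Ioi (-1 : ℝ), DifferentiableAt ℝ (g k) α)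
    (Λ : ℝ → ℝ) (S : Set ℝ) (hS : S ∈ 𝓝 (0 : ℝ))
    (h_lim : ∀ α ∈ S, Tendsto (fun k : ℕ => g k α) atTop (𝓝 (Λ α)))
    (hΛ : DifferentiableAt ℝ Λ 0) :
    Tendsto (fun k : ℕ => deriv (g k) 0) atTop (𝓝 (deriv Λ 0))
    ∧ (∀ k : ℕ, deriv (g k) 0 = (k : ℝ)⁻¹ * (-∑ w, p k w * Real.log (p k w)))
    ∧ Tendsto (fun k : ℕ => (k : ℝ)⁻¹ * (-∑ w, p k w * Real.log (p k w)))
        atTop (𝓝 (deriv Λ 0)) := by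
  have hderiv : ∀ k : ℕ,
      deriv (g k) 0 = (k : ℝ)⁻¹ * (-∑ w, p k w * Real.log (p k w)) := by
    intro k
    rw [show g k = fun α : ℝ =>
      (k : ℝ)⁻¹ * (1 + α) * Real.log (∑ w, p k w ^ (1 / (1 + α))) from funext (hg k)]
    exact (hasDerivAt_mul_log_sum_rpow (p k) (hp_nonneg k) (hp_sum k) _).deriv
  have hlim : Tendsto (fun k : ℕ => deriv (g k) 0) atTop (𝓝 (deriv Λ 0)) :=
    tendsto_deriv_of_convexOn (Ioi_mem_nhds (by norm_num)) hg_convex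
      (fun k => hg_diff k 0 (by norm_num)) (mem_of_superset hS h_lim) hΛ
  exact ⟨hlim, hderiv, hlim.congr hderiv⟩
end

section
/- Let q be a probability mass function on the alphabet A = Fin m with all q(a) > 0, and for each k let p_k on A^k be the i.i.d. product p_k(w) = Π_{i=1}^k q(w_i), with G_k any guesswork function for p_k. Then for every α ≤ -1, lim_{k→∞} (1/k) log Σ_{w∈A^k} p_k(w) G_k(w)^α = log max_{a∈A} q(a). -/
/-!
Write `M = ⨆ a, q a` and `S k` for the sum inside the logarithm. The word guessed first has
probability at least that of the constant word at a maximising letter, so `M ^ k ≤ S k`. Every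
word has probability at most `M ^ k`, and for `α ≤ -1` the bijectivity of `G k` bounds
`∑ w, G k w ^ α` by the harmonic number of `m ^ k`, which is at most `1 + k * log m`; hence
`S k ≤ M ^ k * (1 + k * log m)`. The extra factor is polynomial in `k`, so it disappears on the
exponential scale.
-/

open Filter Topology

/-- Subexponential correction factors do not contribute to the rate. -/
lemma tendsto_inv_mul_log_one_add_mul (c : ℝ) (hc : 0 ≤ c) :
    Tendsto (fun k : ℕ => (k : ℝ)⁻¹ * Real.log (1 + k * c)) atTop (𝓝 0) := by
  have h1 : Tendsto (fun k : ℕ => Real.log (k : ℝ) / (k : ℝ)) atTop (𝓝 0) :=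
    (Real.isLittleO_log_id_atTop.tendsto_div_nhds_zero).comp tendsto_natCast_atTop_atTop
  have h2 : Tendsto (fun k : ℕ => Real.log (1 + c) / (k : ℝ)) atTop (𝓝 0) :=
    tendsto_const_div_atTop_nhds_zero_nat _
  have h3 := h1.add h2
  rw [add_zero] at h3
  refine squeeze_zero' (Eventually.of_forall fun k => ?_) ?_ h3
  · have : 0 ≤ (k : ℝ) * c := by positivity
    exact mul_nonneg (by positivity) (Real.log_nonneg (by linarith))
  · filter_upwards [eventually_ge_atTop 1] with k hk
    have hk' : (1 : ℝ) ≤ k := by exact_mod_cast hk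
    rw [← add_div, ← Real.log_mul (by positivity) (by positivity), div_eq_inv_mul]
    gcongr
    linarith

/-- For `α ≤ -1`, the negative moments of a bijective ranking are dominated by a harmonic sum. -/
lemma sum_rpow_le_one_add_log {W : Type*} [Fintype W] (n : ℕ) (g : W → ℕ)
    (hg : Set.BijOn g Set.univ (Set.Icc 1 n)) (α : ℝ) (hα : α ≤ -1) :
    ∑ w, (g w : ℝ) ^ α ≤ 1 + Real.log n := by
  have h1 : ∑ w, ((g w : ℝ))⁻¹ = ∑ j ∈ Finset.Icc 1 n, (j : ℝ)⁻¹ := by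
    refine Finset.sum_bij (fun w _ => g w) ?_ ?_ ?_ ?_
    · intro w _
      simpa using hg.mapsTo (Set.mem_univ w)
    · intro a _ b _ h
      exact hg.injOn (Set.mem_univ a) (Set.mem_univ b) h
    · intro j hj
      obtain ⟨w, -, hw⟩ := hg.surjOn (by simpa using hj : j ∈ Set.Icc 1 n)
      exact ⟨w, Finset.mem_univ w, hw⟩
    · intro w _
      rfl
  have h2 : ∑ j ∈ Finset.Icc 1 n, (j : ℝ)⁻¹ = ((harmonic n : ℚ) : ℝ) := by
    rw [harmonic_eq_sum_Icc]
    push_cast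
    rfl
  refine le_trans (Finset.sum_le_sum fun w _ => ?_)
    ((h1.trans h2).le.trans (harmonic_le_one_add_log n))
  have hw : (1 : ℝ) ≤ g w := by exact_mod_cast (hg.mapsTo (Set.mem_univ w)).1
  rw [← Real.rpow_neg_one]
  exact Real.rpow_le_rpow_of_exponent_le hw hα

/-- **Guesswork: the sCGF below `-1` for i.i.d. letters.**
For words made of i.i.d. letters with positive marginal `q`, and any guesswork function
`G_k`, for every `α ≤ -1` the scaled cumulant generating function at `α` equals
`log max_a q(a)`, the rate of the probability of the most likely word. -/
theorem guesswork_iid_sCGF_below_neg_one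
    (m : ℕ) (hm : 2 ≤ m) (q : Fin m → ℝ)
    (hq_pos : ∀ a, 0 < q a) (hq_sum : ∑ a, q a = 1)
    (G : (k : ℕ) → (Fin k → Fin m) → ℕ)
    (hG_bij : ∀ k, Set.BijOn (G k) Set.univ (Set.Icc 1 (m ^ k)))
    (hG_mono : ∀ k (w w' : Fin k → Fin m),
      G k w < G k w' → ∏ i, q (w' i) ≤ ∏ i, q (w i)) :
    ∀ α : ℝ, α ≤ -1 →
      Tendsto (fun k : ℕ => (k : ℝ)⁻¹ *
          Real.log (∑ w : Fin k → Fin m, (∏ i, q (w i)) * (G k w : ℝ) ^ α))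
        atTop (𝓝 (Real.log (⨆ a, q a))) := by
  intro α hα
  haveI : Nonempty (Fin m) := ⟨⟨0, by omega⟩⟩
  obtain ⟨a, ha⟩ := exists_eq_ciSup_of_finite (f := q)
  have hle : ∀ b, q b ≤ q a := fun b => ha ▸ le_ciSup (Set.finite_range q).bddAbove b
  rw [← ha]
  have hM := hq_pos a
  have hc : 0 ≤ Real.log m := Real.log_natCast_nonneg m
  have hlow : ∀ k, q a ^ k ≤ ∑ w : Fin k → Fin m, (∏ i, q (w i)) * (G k w : ℝ) ^ α := by
    intro k
    obtain ⟨w, -, hw⟩ := (hG_bij k).surjOn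
      (show 1 ∈ Set.Icc 1 (m ^ k) from ⟨le_rfl, Nat.one_le_pow _ _ (by omega)⟩)
    have h1 : q a ^ k ≤ ∏ i, q (w i) := by
      have hconst : ∏ _i : Fin k, q a = q a ^ k := by simp
      rw [← hconst]
      rcases ((hG_bij k).mapsTo (Set.mem_univ fun _ => a)).1.eq_or_lt with h | h
      -- either the constant word is itself the first guess, or it is guessed strictly later
      · have : w = fun _ => a :=
          (hG_bij k).injOn (Set.mem_univ _) (Set.mem_univ _) (hw.trans h)
        rw [this]
      · exact hG_mono k w (fun _ => a) (hw ▸ h)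
    refine h1.trans ?_
    have h2 := Finset.single_le_sum (f := fun w : Fin k → Fin m =>
      (∏ i, q (w i)) * (G k w : ℝ) ^ α)
      (fun v _ => mul_nonneg (Finset.prod_nonneg fun i _ => (hq_pos _).le)
        (Real.rpow_nonneg (Nat.cast_nonneg _) _)) (Finset.mem_univ w)
    simpa [hw] using h2
  have hup : ∀ k, ∑ w : Fin k → Fin m, (∏ i, q (w i)) * (G k w : ℝ) ^ α
      ≤ q a ^ k * (1 + k * Real.log m) := by
    intro k
    have h1 := sum_rpow_le_one_add_log (m ^ k) (G k) (hG_bij k) α hα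
    rw [Nat.cast_pow, Real.log_pow] at h1
    refine le_trans ?_ (mul_le_mul_of_nonneg_left h1 (by positivity))
    rw [Finset.mul_sum]
    refine Finset.sum_le_sum fun w _ => mul_le_mul_of_nonneg_right ?_
      (Real.rpow_nonneg (Nat.cast_nonneg _) _)
    refine (Finset.prod_le_prod (fun i _ => (hq_pos (w i)).le) (fun i _ => hle (w i))).trans ?_
    simp
  have hlim : Tendsto (fun k : ℕ => Real.log (q a) + (k : ℝ)⁻¹ * Real.log (1 + k * Real.log m))
      atTop (𝓝 (Real.log (q a))) := by
    simpa using (tendsto_inv_mul_log_one_add_mul _ hc).const_add (Real.log (q a))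
  refine tendsto_of_tendsto_of_tendsto_of_le_of_le' tendsto_const_nhds hlim ?_ ?_
  · filter_upwards [eventually_ge_atTop 1] with k hk
    have hk' : (0 : ℝ) < k := by exact_mod_cast hk
    have h := Real.log_le_log (by positivity) (hlow k)
    rw [Real.log_pow] at h
    rwa [← div_eq_inv_mul, le_div_iff₀' hk']
  · filter_upwards [eventually_ge_atTop 1] with k hk
    have hk' : (0 : ℝ) < k := by exact_mod_cast hk
    have h := Real.log_le_log (lt_of_lt_of_le (by positivity) (hlow k)) (hup k)
    rw [Real.log_mul (by positivity) (by positivity), Real.log_pow] at h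
    calc _ ≤ (k : ℝ)⁻¹ * (k * Real.log (q a) + Real.log (1 + k * Real.log m)) := by gcongr
      _ = _ := by field_simp
end

section
/- Under Assumptions 1 and 2, let γ := lim_{α↓-1} Λ'(α), extend Λ by Λ(α) := p₁ for α ≤ -1, and set Λ*(x) := sup_{α∈ℝ} (xα - Λ(α)). Then the rate function is linear with slope -1 on the initial interval: for every x ∈ [0, γ], Λ*(x) = -x - p₁. -/
/-!
The tangent line to the convex function `Λ` at `-1⁺` lies below `Λ`. That `Λ` is convex on
`(-1, ∞)` follows from Hölder's inequality, in the form that `α ↦ log ∑ p G ^ α` is convex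
(`convexOn_log_sum_mul_rpow`), since a pointwise limit of convex functions is convex.

The value of `Λ` at `-1⁺` comes from the Rényi entropy formula: the `1 / s`-power sum of a
function on `N` points with maximum `M` lies between `M ^ (1 / s)` and `N * M ^ (1 / s)`
(`log_iSup_le_mul_log_sum`, `mul_log_sum_le`), so with `s = 1 + α` and `N = m ^ k` one gets
`p₁ ≤ Λ α ≤ p₁ + (1 + α) * log m`.

Letting `β ↓ -1` in `Λ β + Λ' β * (α - β) ≤ Λ α` gives `p₁ + γ * (α + 1) ≤ Λ α` for `α > -1`.
For `0 ≤ x ≤ γ` the function `α ↦ x * α - Λ α` is therefore maximal at `α = -1`.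
-/

open Filter Topology

open scoped Classical ENNReal

/-- The cumulant generating function of `log g` under the weights `q` is convex. -/
theorem convexOn_log_sum_mul_rpow {ι : Type*} [Fintype ι] (q g : ι → ℝ)
    (hq : ∀ i, 0 ≤ q i) (hq1 : ∑ i, q i = 1) (hg : ∀ i, 0 < g i) :
    ConvexOn ℝ Set.univ (fun α : ℝ => Real.log (∑ i, q i * g i ^ α)) := by
  have hpos : ∀ α : ℝ, 0 < ∑ i, q i * g i ^ α := by
    intro α
    obtain ⟨i, -, hi⟩ : ∃ i ∈ Finset.univ, 0 < q i := by
      apply Finset.exists_lt_of_sum_lt (f := fun _ => (0 : ℝ))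
      simp [hq1]
    exact Finset.sum_pos' (fun j _ => mul_nonneg (hq j) (Real.rpow_pos_of_pos (hg j) _).le)
      ⟨i, Finset.mem_univ i, mul_pos hi (Real.rpow_pos_of_pos (hg i) _)⟩
  refine ⟨convex_univ, fun α _ β _ a b ha hb hab => ?_⟩
  simp only [smul_eq_mul]
  set A := ∑ i, q i * g i ^ α with hA
  set B := ∑ i, q i * g i ^ β with hB
  have hApos : 0 < A := hpos α
  have hBpos : 0 < B := hpos β
  have hnn : ∀ i (t : ℝ), 0 ≤ q i * g i ^ t := fun i t =>
    mul_nonneg (hq i) (Real.rpow_pos_of_pos (hg i) t).le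
  -- Weighted AM-GM for the normalised terms; summing over `i` yields Hölder's inequality.
  have key : ∀ i, q i * g i ^ (a * α + b * β) ≤
      A ^ a * B ^ b * (a * (q i * g i ^ α / A) + b * (q i * g i ^ β / B)) := by
    intro i
    have h1 := Real.geom_mean_le_arith_mean2_weighted ha hb
      (div_nonneg (hnn i α) hApos.le) (div_nonneg (hnn i β) hBpos.le) hab
    have hAa := Real.rpow_pos_of_pos hApos a
    have hBb := Real.rpow_pos_of_pos hBpos b
    refine le_trans (le_of_eq ?_) (mul_le_mul_of_nonneg_left h1 (mul_pos hAa hBb).le)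
    have hgi := hg i
    rw [Real.div_rpow (hnn i α) hApos.le, Real.div_rpow (hnn i β) hBpos.le,
      Real.mul_rpow (hq i) (Real.rpow_pos_of_pos hgi α).le,
      Real.mul_rpow (hq i) (Real.rpow_pos_of_pos hgi β).le,
      ← Real.rpow_mul hgi.le, ← Real.rpow_mul hgi.le, Real.rpow_add hgi,
      mul_comm a α, mul_comm b β]
    have hqq : q i = q i ^ a * q i ^ b := by
      rw [← Real.rpow_add_of_nonneg (hq i) ha hb, hab, Real.rpow_one]
    field_simp
    linear_combination hqq
  have hsum : ∑ i, q i * g i ^ (a * α + b * β) ≤ A ^ a * B ^ b := by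
    refine (Finset.sum_le_sum fun i _ => key i).trans (le_of_eq ?_)
    rw [← Finset.mul_sum, Finset.sum_add_distrib, ← Finset.mul_sum, ← Finset.mul_sum,
      ← Finset.sum_div, ← Finset.sum_div, ← hA, ← hB, div_self hApos.ne', div_self hBpos.ne']
    simp [hab]
  calc Real.log (∑ i, q i * g i ^ (a * α + b * β)) ≤ Real.log (A ^ a * B ^ b) :=
        Real.log_le_log (hpos _) hsum
    _ = a * Real.log A + b * Real.log B := by
        rw [Real.log_mul (Real.rpow_pos_of_pos hApos a).ne' (Real.rpow_pos_of_pos hBpos b).ne',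
          Real.log_rpow hApos, Real.log_rpow hBpos]

theorem iSup_pos_of_sum_eq_one {ι : Type*} [Fintype ι] {q : ι → ℝ}
    (hq1 : ∑ i, q i = 1) : 0 < ⨆ i, q i := by
  obtain ⟨i, -, hi⟩ : ∃ i ∈ Finset.univ, 0 < q i := by
    apply Finset.exists_lt_of_sum_lt (f := fun _ => (0 : ℝ))
    simp [hq1]
  exact hi.trans_le (le_ciSup (Set.finite_range q).bddAbove i)

/-- A power sum dominates the power of the maximum. -/
theorem log_iSup_le_mul_log_sum {ι : Type*} [Fintype ι] [Nonempty ι] {q : ι → ℝ}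
    (hq : ∀ i, 0 ≤ q i) (hq1 : ∑ i, q i = 1) {s : ℝ} (hs : 0 < s) :
    Real.log (⨆ i, q i) ≤ s * Real.log (∑ i, q i ^ (1 / s)) := by
  have hM := iSup_pos_of_sum_eq_one hq1
  obtain ⟨i, hi⟩ := exists_eq_ciSup_of_finite (f := q)
  rw [← hi] at hM ⊢
  have h1 : q i ^ (1 / s) ≤ ∑ j, q j ^ (1 / s) :=
    Finset.single_le_sum (f := fun j => q j ^ (1 / s))
      (fun j _ => Real.rpow_nonneg (hq j) _) (Finset.mem_univ i)
  have h2 := mul_le_mul_of_nonneg_left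
    (Real.log_le_log (Real.rpow_pos_of_pos hM _) h1) hs.le
  rw [Real.log_rpow hM] at h2
  refine le_trans (le_of_eq ?_) h2
  field_simp

/-- A power sum is at most the number of terms times the power of the maximum. -/
theorem mul_log_sum_le {ι : Type*} [Fintype ι] [Nonempty ι] {q : ι → ℝ}
    (hq : ∀ i, 0 ≤ q i) (hq1 : ∑ i, q i = 1) {s : ℝ} (hs : 0 < s) :
    s * Real.log (∑ i, q i ^ (1 / s)) ≤
      s * Real.log (Fintype.card ι) + Real.log (⨆ i, q i) := by
  have hM := iSup_pos_of_sum_eq_one hq1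
  set M := ⨆ i, q i with hMdef
  have h1 : ∑ i, q i ^ (1 / s) ≤ Fintype.card ι * M ^ (1 / s) := by
    refine (Finset.sum_le_card_nsmul _ _ (M ^ (1 / s)) fun i _ => ?_).trans (by simp)
    exact Real.rpow_le_rpow (hq i) (le_ciSup (Set.finite_range q).bddAbove i) (by positivity)
  have h0 : 0 < ∑ i, q i ^ (1 / s) := by
    obtain ⟨i, hi⟩ := exists_eq_ciSup_of_finite (f := q)
    have hqi : 0 < q i := by rw [hi]; exact hM
    exact Finset.sum_pos' (fun j _ => Real.rpow_nonneg (hq j) _)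
      ⟨i, Finset.mem_univ i, Real.rpow_pos_of_pos hqi _⟩
  have hc : (0 : ℝ) < Fintype.card ι := by exact_mod_cast Fintype.card_pos
  have h2 := mul_le_mul_of_nonneg_left (Real.log_le_log h0 h1) hs.le
  rw [Real.log_mul hc.ne' (Real.rpow_pos_of_pos hM _).ne', Real.log_rpow hM] at h2
  refine h2.trans (le_of_eq ?_)
  field_simp

/-- **Guesswork: the rate function is linear on the initial interval.**
Under Assumptions 1 and 2, with `γ = lim_{α↓-1} Λ'(α)`, for every `x ∈ [0, γ]` the rate
function satisfies `Λ*(x) = -x - p₁`. -/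
theorem guesswork_rate_linear_on_initial_interval
    (m : ℕ) (hm : 2 ≤ m)
    (p : (k : ℕ) → (Fin k → Fin m) → ℝ)
    (hp_nonneg : ∀ k w, 0 ≤ p k w)
    (hp_sum : ∀ k, ∑ w, p k w = 1)
    (G : (k : ℕ) → (Fin k → Fin m) → ℕ)
    (hG_bij : ∀ k, Set.BijOn (G k) Set.univ (Set.Icc 1 (m ^ k)))
    (hG_mono : ∀ k (w w' : Fin k → Fin m), G k w < G k w' → p k w' ≤ p k w)
    (Λ Λ' : ℝ → ℝ)
    (h_sCGF : ∀ α : ℝ, -1 < α →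
      Tendsto (fun k : ℕ => (k : ℝ)⁻¹ *
          Real.log (∑ w, p k w * (G k w : ℝ) ^ α)) atTop (𝓝 (Λ α)))
    (h_deriv : ∀ α : ℝ, -1 < α → HasDerivAt Λ (Λ' α) α)
    (h_deriv_cont : ContinuousOn Λ' (Set.Ioi (-1 : ℝ)))
    (h_renyi : ∀ α : ℝ, -1 < α →
      Tendsto (fun k : ℕ => (k : ℝ)⁻¹ * (1 + α) *
          Real.log (∑ w, p k w ^ (1 / (1 + α)))) atTop (𝓝 (Λ α)))
    (p₁ : ℝ) (hp₁_le : p₁ ≤ 0)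
    (hp₁ : Tendsto (fun k : ℕ => (k : ℝ)⁻¹ * Real.log (⨆ w, p k w)) atTop (𝓝 p₁))
    (γ : ℝ) (hγ : Tendsto Λ' (𝓝[>] (-1 : ℝ)) (𝓝 γ)) :
    ∀ x ∈ Set.Icc (0 : ℝ) γ,
      guessworkRate Λ p₁ x = ((-x - p₁ : ℝ) : EReal) := by
  have hne : ∀ k, Nonempty (Fin k → Fin m) := fun k => ⟨fun _ => ⟨0, by omega⟩⟩
  have hconv : ConvexOn ℝ (Set.Ioi (-1 : ℝ)) Λ := by
    refine ⟨convex_Ioi _, fun α hα β hβ a b ha hb hab => ?_⟩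
    have hmem := convex_Ioi (-1 : ℝ) hα hβ ha hb hab
    refine le_of_tendsto_of_tendsto' (h_sCGF _ hmem)
      (((h_sCGF α hα).const_smul a).add ((h_sCGF β hβ).const_smul b)) fun k => ?_
    have hGpos : ∀ w, (0 : ℝ) < G k w := fun w => by
      exact_mod_cast ((hG_bij k).mapsTo (Set.mem_univ w)).1
    have h := (convexOn_log_sum_mul_rpow (p k) (fun w => (G k w : ℝ)) (hp_nonneg k)
      (hp_sum k) hGpos).2 (Set.mem_univ α) (Set.mem_univ β) ha hb hab
    have h' := mul_le_mul_of_nonneg_left h (inv_nonneg.2 (Nat.cast_nonneg (α := ℝ) k))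
    refine h'.trans (le_of_eq ?_)
    simp only [smul_eq_mul]
    ring
  have hlow : ∀ α : ℝ, -1 < α → p₁ ≤ Λ α := fun α hα => by
    have := hne
    refine le_of_tendsto_of_tendsto' hp₁ (h_renyi α hα) fun k => ?_
    rw [mul_assoc]
    exact mul_le_mul_of_nonneg_left
      (log_iSup_le_mul_log_sum (hp_nonneg k) (hp_sum k) (by linarith))
      (inv_nonneg.2 (Nat.cast_nonneg k))
  have hup : ∀ α : ℝ, -1 < α → Λ α ≤ (1 + α) * Real.log m + p₁ := fun α hα => by
    have := hne
    refine le_of_tendsto_of_tendsto (h_renyi α hα) (hp₁.const_add _) ?_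
    filter_upwards [eventually_gt_atTop 0] with k hk
    have hk' : (0 : ℝ) < k := by exact_mod_cast hk
    have h := mul_le_mul_of_nonneg_left
      (mul_log_sum_le (hp_nonneg k) (hp_sum k) (s := 1 + α) (by linarith))
      (inv_nonneg.2 hk'.le)
    rw [mul_assoc]
    refine h.trans (le_of_eq ?_)
    simp only [Fintype.card_fun, Fintype.card_fin, Nat.cast_pow, Real.log_pow]
    field_simp
  have hid : Tendsto (fun β : ℝ => β) (𝓝[>] (-1 : ℝ)) (𝓝 (-1)) :=
    tendsto_id.mono_left nhdsWithin_le_nhds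
  have hlim : Tendsto Λ (𝓝[>] (-1 : ℝ)) (𝓝 p₁) := by
    have hu : Tendsto (fun β : ℝ => (1 + β) * Real.log m + p₁) (𝓝[>] (-1 : ℝ)) (𝓝 p₁) := by
      simpa using ((hid.const_add 1).mul_const (Real.log m)).add_const p₁
    refine tendsto_of_tendsto_of_tendsto_of_le_of_le' tendsto_const_nhds hu ?_ ?_
    · filter_upwards [self_mem_nhdsWithin] with β hβ using hlow β hβ
    · filter_upwards [self_mem_nhdsWithin] with β hβ using hup β hβ
  have htan : ∀ α : ℝ, -1 < α → p₁ + γ * (α + 1) ≤ Λ α := fun α hα => by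
    have ht : Tendsto (fun β => Λ β + Λ' β * (α - β)) (𝓝[>] (-1 : ℝ))
        (𝓝 (p₁ + γ * (α + 1))) := by
      simpa using hlim.add (hγ.mul (hid.const_sub α))
    refine le_of_tendsto ht ?_
    filter_upwards [Ioo_mem_nhdsGT hα] with β hβ
    have h := hconv.le_slope_of_hasDerivAt hβ.1 hα hβ.2 (h_deriv β hβ.1)
    rw [slope_def_field, le_div_iff₀ (sub_pos.2 hβ.2)] at h
    linarith
  rintro x ⟨hx0, hxγ⟩
  refine le_antisymm (iSup_le fun α => EReal.coe_le_coe_iff.2 ?_) ?_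
  · unfold guessworkLambdaExt
    split_ifs with h
    · nlinarith
    · have hα := not_le.1 h
      nlinarith [htan α hα]
  · refine le_iSup_of_le (-1) (EReal.coe_le_coe_iff.2 (le_of_eq ?_))
    simp [guessworkLambdaExt]
end

section
/- Let p₁₁, p₂₂ ∈ (0,1) with p₁₁ = √((1-p₁₁)(1-p₂₂)) and p₁₁ > p₂₂, and set p₁₂ = 1 - p₁₁, p₂₁ = 1 - p₂₂. For α > -1 put β = 1/(1+α) and define f(α) = (1+α) log [ (p₁₁^β + p₂₂^β)/2 + √((p₁₁^β - p₂₂^β)² + 4 (p₁₂ p₂₁)^β)/2 ]. Then lim_{α↓-1} f'(α) = log φ, where φ = (1+√5)/2 is the Golden Ratio. -/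
open Filter Topology

/-!
Put `s = 1 + α` and `r = p₂₂ / p₁₁ ∈ (0, 1)`. Since `p₁₂ p₂₁ = p₁₁²`, the factor `p₁₁ ^ (1 / s)`
comes out of the spectral radius, so that
`f(α) = log p₁₁ + s * log (g t)` with `t = r ^ (1 / s)` and
`g t = (1 + t) / 2 + √((1 - t)² + 4) / 2` (`f_eq`). Differentiating (`hasDerivAt_scaled`) and
using `t log t = t log r / s` gives
`f'(α) = log (g t) + (g' t / g t) * (-t log t)`, a continuous function of `t`, including at `t = 0`.
As `α ↓ -1` we have `t → 0`, so the limit is `log (g 0) = log ((1 + √5) / 2)`.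
-/

/-- The largest eigenvalue of the matrix `((1, b), (c, t))` with `b * c = 1`. -/
noncomputable def normRho (t : ℝ) : ℝ := (1 + t) / 2 + Real.sqrt ((1 - t) ^ 2 + 4) / 2

/-- The derivative of `normRho` (see `hasDerivAt_normRho`). -/
noncomputable def normRhoDeriv (t : ℝ) : ℝ :=
  1 / 2 + (-(1 - t)) / (2 * Real.sqrt ((1 - t) ^ 2 + 4))

lemma normRho_pos {t : ℝ} (ht : 0 ≤ t) : 0 < normRho t := by
  unfold normRho
  positivity

lemma hasDerivAt_normRho (t : ℝ) : HasDerivAt normRho (normRhoDeriv t) t := by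
  have hq : HasDerivAt (fun t : ℝ => (1 - t) ^ 2 + 4) (2 * (1 - t) * (-1)) t := by
    have := (((hasDerivAt_id t).const_sub 1).pow 2).add_const 4
    simpa using this
  have hpos : 0 < (1 - t) ^ 2 + 4 := by positivity
  have h := (((hasDerivAt_id t).const_add 1).div_const 2).add ((hq.sqrt hpos.ne').div_const 2)
  have hs : 0 < Real.sqrt ((1 - t) ^ 2 + 4) := Real.sqrt_pos.2 hpos
  refine h.congr_deriv ?_
  unfold normRhoDeriv
  field_simp

lemma continuous_normRhoDeriv : Continuous normRhoDeriv := by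
  unfold normRhoDeriv
  refine continuous_const.add (Continuous.div (by fun_prop) (by fun_prop) fun t => ?_)
  positivity

lemma hasDerivAt_scaled (L α : ℝ) (hα : -1 < α) :
    HasDerivAt (fun α : ℝ => (1 + α) * Real.log (normRho (Real.exp (L / (1 + α)))))
      (Real.log (normRho (Real.exp (L / (1 + α)))) +
        normRhoDeriv (Real.exp (L / (1 + α))) / normRho (Real.exp (L / (1 + α))) *
          Real.negMulLog (Real.exp (L / (1 + α)))) α := by
  have hs : 1 + α ≠ 0 := by linarith
  have h1 : HasDerivAt (fun α : ℝ => 1 + α) 1 α := (hasDerivAt_id α).const_add 1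
  have h2 := ((hasDerivAt_const α L).div h1 hs).exp
  have hg := normRho_pos (Real.exp_pos (L / (1 + α))).le
  have h3 := ((hasDerivAt_normRho (Real.exp (L / (1 + α)))).comp α h2).log (by exact hg.ne')
  refine (h1.mul h3).congr_deriv ?_
  simp only [Function.comp, Real.negMulLog, Real.log_exp, Pi.div_apply]
  field_simp
  ring

/-- The factor `a ^ (1 / (1 + α))` comes out of the spectral radius. -/
lemma f_eq (a b α : ℝ) (ha : 0 < a) (hb : 0 < b) (hα : -1 < α) :
    (1 + α) * Real.log ((a ^ (1 / (1 + α)) + b ^ (1 / (1 + α))) / 2 +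
        Real.sqrt ((a ^ (1 / (1 + α)) - b ^ (1 / (1 + α))) ^ 2 +
          4 * (a ^ 2) ^ (1 / (1 + α))) / 2) =
      Real.log a + (1 + α) * Real.log (normRho (Real.exp (Real.log (b / a) / (1 + α)))) := by
  have hs : 1 + α ≠ 0 := by linarith
  set t := Real.exp (Real.log (b / a) / (1 + α)) with ht
  set A := a ^ (1 / (1 + α)) with hA
  have hA0 : 0 < A := Real.rpow_pos_of_pos ha _
  have hB : b ^ (1 / (1 + α)) = A * t := by
    rw [hA, ht, Real.rpow_def_of_pos ha, Real.rpow_def_of_pos hb, ← Real.exp_add,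
      Real.log_div hb.ne' ha.ne']
    congr 1
    ring
  have hC : (a ^ 2) ^ (1 / (1 + α)) = A ^ 2 := by
    rw [pow_two, Real.mul_rpow ha.le ha.le, pow_two]
  have hsq : Real.sqrt ((A - A * t) ^ 2 + 4 * A ^ 2) = A * Real.sqrt ((1 - t) ^ 2 + 4) := by
    rw [show (A - A * t) ^ 2 + 4 * A ^ 2 = A ^ 2 * ((1 - t) ^ 2 + 4) by ring,
      Real.sqrt_mul (by positivity), Real.sqrt_sq hA0.le]
  have hfac : (A + A * t) / 2 + A * Real.sqrt ((1 - t) ^ 2 + 4) / 2 = A * normRho t := by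
    unfold normRho
    ring
  have hg : 0 < normRho t := normRho_pos (Real.exp_pos _).le
  rw [hB, hC, hsq, hfac, Real.log_mul hA0.ne' hg.ne', hA, Real.log_rpow ha]
  field_simp

/-- **Guesswork: the Golden Ratio case for Markovian letters.**
If `p₁₁ = √(p₁₂ p₂₁)` and `p₁₁ > p₂₂`, then the limit as `α ↓ -1` of the derivative of
`f(α) = (1+α) log ρ(P_α)` (with `ρ(P_α)` the spectral radius of the matrix with entries
`p_{i,j}^{1/(1+α)}`, in closed form) equals `log φ`, where `φ = (1+√5)/2` is the Golden
Ratio. -/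
theorem guesswork_markov_golden_ratio_case
    (p11 p22 : ℝ) (h11 : p11 ∈ Set.Ioo (0 : ℝ) 1) (h22 : p22 ∈ Set.Ioo (0 : ℝ) 1)
    (h_eq : p11 = Real.sqrt ((1 - p11) * (1 - p22))) (h_gt : p22 < p11) :
    Tendsto (deriv (fun α : ℝ =>
        (1 + α) * Real.log
          ((p11 ^ (1 / (1 + α)) + p22 ^ (1 / (1 + α))) / 2 +
            Real.sqrt ((p11 ^ (1 / (1 + α)) - p22 ^ (1 / (1 + α))) ^ 2 +
                4 * ((1 - p11) * (1 - p22)) ^ (1 / (1 + α))) / 2)))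
      (𝓝[>] (-1 : ℝ)) (𝓝 (Real.log ((1 + Real.sqrt 5) / 2))) := by
  obtain ⟨ha, ha1⟩ := h11
  obtain ⟨hb, hb1⟩ := h22
  have hprod : (1 - p11) * (1 - p22) = p11 ^ 2 := by
    have h0 : 0 ≤ (1 - p11) * (1 - p22) :=
      mul_nonneg (by linarith) (by linarith)
    conv_rhs => rw [h_eq]
    exact (Real.sq_sqrt h0).symm
  rw [hprod]
  set L := Real.log (p22 / p11) with hL
  have hL0 : L < 0 := Real.log_neg (by positivity) ((div_lt_one ha).2 h_gt)
  have ht : Tendsto (fun α : ℝ => Real.exp (L / (1 + α))) (𝓝[>] (-1 : ℝ)) (𝓝 0) := by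
    have h1 : Tendsto (fun α : ℝ => 1 + α) (𝓝[>] (-1 : ℝ)) (𝓝[>] 0) := by
      refine tendsto_nhdsWithin_iff.2 ⟨?_, ?_⟩
      · have : Tendsto (fun α : ℝ => 1 + α) (𝓝 (-1 : ℝ)) (𝓝 (1 + -1)) :=
          Continuous.tendsto (by fun_prop) _
        rw [add_neg_cancel] at this
        exact this.mono_left nhdsWithin_le_nhds
      · filter_upwards [self_mem_nhdsWithin] with α hα
        have : -1 < α := hα
        exact Set.mem_Ioi.2 (by linarith)
    have h2 := (tendsto_inv_nhdsGT_zero.comp h1).const_mul_atTop_of_neg hL0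
    exact Real.tendsto_exp_atBot.comp h2
  have hF : ContinuousAt (fun t : ℝ => Real.log (normRho t) +
      normRhoDeriv t / normRho t * Real.negMulLog t) 0 := by
    have hg := (normRho_pos le_rfl).ne'
    have hc := (hasDerivAt_normRho 0).continuousAt
    exact (hc.log hg).add ((continuous_normRhoDeriv.continuousAt.div hc hg).mul
      Real.continuous_negMulLog.continuousAt)
  have hlim := hF.tendsto.comp ht
  have h0 : Real.log (normRho 0) + normRhoDeriv 0 / normRho 0 * Real.negMulLog 0 =
      Real.log ((1 + Real.sqrt 5) / 2) := by
    simp only [Real.negMulLog_zero, mul_zero, add_zero, normRho]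
    congr 1
    norm_num
    ring
  rw [h0] at hlim
  refine hlim.congr' ?_
  filter_upwards [self_mem_nhdsWithin] with α hα
  refine (HasDerivAt.deriv ?_).symm
  refine ((hasDerivAt_scaled L α hα).const_add (Real.log p11)).congr_of_eventuallyEq ?_
  filter_upwards [Ioi_mem_nhds (show -1 < α from hα)] with x hx
  exact f_eq p11 p22 x ha hb hx
end
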